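/- arXiv:2502.13529 — 3 statements merged into one kernel-verified Lean document; each statement's English description precedes it below -/
import Mathlib

section
/- Let f be a Holland map in Hol(γ,ρ) with γ < 1, with invariant density h and points z_n. There exists a constant C > 0 such that for all integers 1 ≤ i < j, V(1_{[z_j,z_i]} h) ≤ C j and V(1_{[z_j,z_i]} / h) ≤ C j / i². -/
open MeasureTheory Filter Set Topology

structure IsHolland (γ : ℝ) (ρ : ℝ → ℝ) (f : ℝ → ℝ) : Prop where
  gamma_pos : 0 < γ
  rho_pos : ∀ x ∈ Set.Ioo (0:ℝ) 1, 0 < ρ x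
  maps_to : ∀ x ∈ Set.Icc (0:ℝ) 1, f x ∈ Set.Icc (0:ℝ) 1
  eq_left : ∀ x ∈ Set.Icc (0:ℝ) (1/2), f x = x * (1 + x ^ γ * ρ x)
  eq_right : ∀ x ∈ Set.Ioc (1/2:ℝ) 1, f x = 2 * x - 1
  smooth : ContDiffOn ℝ 2 ρ (Set.Ioo 0 1)
  slowly_zero : ∀ l : ℝ, 0 < l →
    Tendsto (fun x => ρ (l * x) / ρ x) (nhdsWithin 0 (Set.Ioi 0)) (nhds 1)
  deriv_small : Tendsto (fun x => x * deriv ρ x / ρ x) (nhdsWithin 0 (Set.Ioi 0)) (nhds 0)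
  deriv2_small : Tendsto (fun x => x ^ 2 * deriv (deriv ρ) x / ρ x)
    (nhdsWithin 0 (Set.Ioi 0)) (nhds 0)
  rho_zero : Tendsto ρ (nhdsWithin 0 (Set.Ioi 0)) (nhds 0)
  half : f (1/2) = 1
  expanding : ∀ x ∈ Set.Ioo (0:ℝ) 1, x ≠ 1/2 → 1 < deriv f x

/-- Local data near the neutral fixed point: the left branch is `x + w x`. -/
structure Loc (δ c K : ℝ) (w w1 w2 : ℝ → ℝ) : Prop where
  dpos : 0 < δ
  cpos : 0 < c
  Kpos : 0 < K
  d1 : ∀ x, 0 < x → x ≤ δ → HasDerivAt w (w1 x) x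
  d2 : ∀ x, 0 < x → x ≤ δ → HasDerivAt w1 (w2 x) x
  wpos : ∀ x, 0 < x → x ≤ δ → 0 < w x
  wle : ∀ x, 0 < x → x ≤ δ → w x ≤ x
  lo : ∀ x, 0 < x → x ≤ δ → (1 + c) * w x ≤ x * w1 x
  hi : ∀ x, 0 < x → x ≤ δ → x * w1 x ≤ 3 * w x
  sec : ∀ x, 0 < x → x ≤ δ → |w2 x| * x ^ 2 ≤ K * w x

namespace Loc

variable {δ c K : ℝ} {w w1 w2 : ℝ → ℝ}

lemma w1pos (L : Loc δ c K w w1 w2) {x : ℝ} (h0 : 0 < x) (h1 : x ≤ δ) : 0 < w1 x := by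
  have h2 := L.lo x h0 h1
  have h3 := L.wpos x h0 h1
  have h4 := L.cpos
  have : 0 < x * w1 x := lt_of_lt_of_le (by positivity) h2
  exact (pos_iff_pos_of_mul_pos this).mp h0

lemma mvt (L : Loc δ c K w w1 w2) {x y : ℝ} (h0 : 0 < x) (hxy : x < y) (h1 : y ≤ δ) :
    ∃ ξ, x ≤ ξ ∧ ξ ≤ y ∧ w y - w x = w1 ξ * (y - x) := by
  obtain ⟨ξ, hξ, e⟩ := exists_hasDerivAt_eq_slope w w1 hxy
    (fun t ht => (L.d1 t (h0.trans_le ht.1) (ht.2.trans h1)).continuousAt.continuousWithinAt)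
    (fun t ht => L.d1 t (h0.trans ht.1) (ht.2.le.trans h1))
  refine ⟨ξ, hξ.1.le, hξ.2.le, ?_⟩
  rw [e, div_mul_cancel₀]
  linarith

lemma mono (L : Loc δ c K w w1 w2) {x y : ℝ} (h0 : 0 < x) (hxy : x ≤ y) (h1 : y ≤ δ) :
    w x ≤ w y := by
  rcases hxy.eq_or_lt with rfl | h
  · rfl
  obtain ⟨ξ, a, b, e⟩ := L.mvt h0 h h1
  have := L.w1pos (h0.trans_le a) (b.trans h1)
  nlinarith

lemma du (L : Loc δ c K w w1 w2) {x : ℝ} (h0 : 0 < x) (h1 : x ≤ δ) :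
    HasDerivAt (fun t => w t / t) ((w1 x * x - w x) / x ^ 2) x := by
  have := (L.d1 x h0 h1).div (hasDerivAt_id x) h0.ne'
  exact this.congr_deriv (by simp)

lemma umvt (L : Loc δ c K w w1 w2) {x y : ℝ} (h0 : 0 < x) (hxy : x < y) (h1 : y ≤ δ) :
    ∃ ξ, x ≤ ξ ∧ ξ ≤ y ∧ w y / y - w x / x = ((w1 ξ * ξ - w ξ) / ξ ^ 2) * (y - x) := by
  obtain ⟨ξ, hξ, e⟩ := exists_hasDerivAt_eq_slope (fun t => w t / t)
    (fun x => (w1 x * x - w x) / x ^ 2) hxy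
    (fun t ht => (L.du (h0.trans_le ht.1) (ht.2.trans h1)).continuousAt.continuousWithinAt)
    (fun t ht => L.du (h0.trans ht.1) (ht.2.le.trans h1))
  refine ⟨ξ, hξ.1.le, hξ.2.le, ?_⟩
  rw [e, div_mul_cancel₀]
  linarith

lemma umono (L : Loc δ c K w w1 w2) {x y : ℝ} (h0 : 0 < x) (hxy : x ≤ y) (h1 : y ≤ δ) :
    w x / x ≤ w y / y := by
  rcases hxy.eq_or_lt with rfl | h
  · rfl
  obtain ⟨ξ, a, b, e⟩ := L.umvt h0 h h1
  have hξ := h0.trans_le a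
  have h2 := L.lo ξ hξ (b.trans h1)
  have h3 := L.wpos ξ hξ (b.trans h1)
  have h4 := L.cpos
  have : 0 ≤ (w1 ξ * ξ - w ξ) / ξ ^ 2 := by
    apply div_nonneg _ (by positivity)
    nlinarith [mul_pos h4 h3]
  have := mul_nonneg this (sub_nonneg.2 hxy)
  linarith

lemma doubling (L : Loc δ c K w w1 w2) {x y : ℝ} (h0 : 0 < x) (hxy : x ≤ y) (h1 : y ≤ δ)
    (h2 : y ≤ 2 * x) : w y ≤ 8 * w x := by
  have hd : ∀ t, 0 < t → t ≤ δ →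
      HasDerivAt (fun t => w t / t ^ 3) ((w1 t * t ^ 3 - w t * (3 * t ^ 2)) / (t ^ 3) ^ 2) t := by
    intro t ht ht'
    have := (L.d1 t ht ht').div (hasDerivAt_pow 3 t) (by positivity)
    exact this.congr_deriv (by simp)
  have hy := h0.trans_le hxy
  have key : w y / y ^ 3 ≤ w x / x ^ 3 := by
    rcases hxy.eq_or_lt with rfl | h
    · rfl
    obtain ⟨ξ, hξ, e⟩ := exists_hasDerivAt_eq_slope (fun t => w t / t ^ 3) _ h
      (fun t ht => (hd t (h0.trans_le ht.1) (ht.2.trans h1)).continuousAt.continuousWithinAt)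
      (fun t ht => hd t (h0.trans ht.1) (ht.2.le.trans h1))
    have hξ0 := h0.trans hξ.1
    have h3 := L.hi ξ hξ0 (hξ.2.le.trans h1)
    have h4 : (w1 ξ * ξ ^ 3 - w ξ * (3 * ξ ^ 2)) / (ξ ^ 3) ^ 2 ≤ 0 := by
      apply div_nonpos_of_nonpos_of_nonneg _ (by positivity)
      nlinarith [mul_nonneg (sq_nonneg ξ) (sub_nonneg.2 h3)]
    rw [e, div_le_iff₀ (by linarith)] at h4
    linarith
  rw [div_le_div_iff₀ (by positivity) (by positivity)] at key
  have hw := L.wpos x h0 (hxy.trans h1)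
  have : y ^ 3 ≤ (2 * x) ^ 3 := by gcongr
  have h5 : w y * x ^ 3 ≤ (8 * w x) * x ^ 3 := by nlinarith
  exact le_of_mul_le_mul_right h5 (by positivity)

lemma dist (L : Loc δ c K w w1 w2) {x ξ η : ℝ} (h0 : 0 < x) (h1 : x + w x ≤ δ)
    (hξ : x ≤ ξ) (hξ' : ξ ≤ x + w x) (hη : x ≤ η) (hη' : η ≤ x + w x) :
    |w1 ξ - w1 η| ≤ 8 * K * (w x / x ^ 2) * |ξ - η| := by
  have hK := L.Kpos
  have hx : x ≤ δ := hξ.trans (hξ'.trans h1)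
  have hle := L.wle x h0 hx
  have := Convex.norm_image_sub_le_of_norm_hasDerivWithin_le (f := w1) (f' := w2)
    (s := Set.Icc x (x + w x)) (C := 8 * K * (w x / x ^ 2)) (x := η) (y := ξ)
    (fun t ht => (L.d2 t (h0.trans_le ht.1) (ht.2.trans h1)).hasDerivWithinAt)
    (fun t ht => by
      have ht0 := h0.trans_le ht.1
      have h3 := L.sec t ht0 (ht.2.trans h1)
      have h4 := L.doubling h0 ht.1 (ht.2.trans h1) (by linarith [ht.2])
      rw [Real.norm_eq_abs, mul_div_assoc', le_div_iff₀ (by positivity)]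
      have : x ^ 2 ≤ t ^ 2 := by gcongr; exact ht.1
      nlinarith [abs_nonneg (w2 t)])
    (convex_Icc _ _) ⟨hη, hη'⟩ ⟨hξ, hξ'⟩
  simpa [Real.norm_eq_abs] using this

lemma ustep (L : Loc δ c K w w1 w2) {x : ℝ} (h0 : 0 < x) (hx : x ≤ δ) (h1 : x + w x ≤ δ) :
    c / 2 * (w x / x) ^ 2 ≤ w (x + w x) / (x + w x) - w x / x ∧
    w (x + w x) / (x + w x) - w x / x ≤ 16 * (w x / x) ^ 2 := by
  have hc := L.cpos
  have hw := L.wpos x h0 hx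
  have hle := L.wle x h0 hx
  obtain ⟨ξ, a, b, e⟩ := L.umvt h0 (y := x + w x) (by linarith) h1
  rw [e]
  have hξ := h0.trans_le a
  have h2 := L.lo ξ hξ (b.trans h1)
  have h3 := L.wpos ξ hξ (b.trans h1)
  have h4 := L.hi ξ hξ (b.trans h1)
  have h5 := L.umono h0 a (b.trans h1)
  have h6 := L.doubling h0 a (b.trans h1) (by linarith)
  have e2 : x + w x - x = w x := by ring
  rw [e2, div_mul_eq_mul_div (w1 ξ * ξ - w ξ)]
  have hwx : w x = (w x / x) * x := by field_simp
  have hwξ : w ξ = (w ξ / ξ) * ξ := by field_simp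
  have hup : 0 < w x / x := by positivity
  constructor
  · rw [le_div_iff₀ (by positivity)]
    have h7 : c * (w x / x * ξ) ≤ w1 ξ * ξ - w ξ := by
      have : w x / x * ξ ≤ w ξ := by rw [hwξ]; gcongr
      nlinarith
    calc c / 2 * (w x / x) ^ 2 * ξ ^ 2 = (c * (w x / x * ξ)) * ((w x / x) * (ξ / 2)) := by ring
      _ ≤ (w1 ξ * ξ - w ξ) * ((w x / x) * x) := by
          apply mul_le_mul h7 _ (by positivity) (le_trans (by positivity) h7)
          gcongr; linarith
      _ = _ := by rw [← hwx]
  · rw [div_le_iff₀ (by positivity)]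
    calc (w1 ξ * ξ - w ξ) * w x ≤ (2 * (8 * w x)) * w x := by
          gcongr; linarith
      _ = 16 * (w x / x) ^ 2 * x ^ 2 := by field_simp; ring
      _ ≤ _ := by gcongr

end Loc
/-- Backward orbit of the left branch. -/
structure Orb (w : ℝ → ℝ) (δ : ℝ) (a : ℕ → ℝ) : Prop where
  pos : ∀ n, 0 < a n
  le : ∀ n, a n ≤ δ
  step : ∀ n, a (n + 1) + w (a (n + 1)) = a n

lemma exp_tele (t e : ℕ → ℝ) (h : ∀ n, t (n + 1) ≤ Real.exp (e n) * t n) (n : ℕ) :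
    t n ≤ Real.exp (∑ k ∈ Finset.range n, e k) * t 0 := by
  induction n with
  | zero => simp
  | succ n ih =>
    rw [Finset.sum_range_succ, add_comm (∑ k ∈ Finset.range n, e k), Real.exp_add, mul_assoc]
    exact (h n).trans (by gcongr)

lemma one_add_le_exp_mul {s t E : ℝ} (ht : 0 ≤ t) (h : |s - t| ≤ E) :
    1 + s ≤ Real.exp E * (1 + t) := by
  have h1 := Real.add_one_le_exp E
  have h2 := (abs_le.1 h).2
  have h3 := (abs_nonneg _).trans h
  nlinarith

namespace Loc

variable {δ c K : ℝ} {w w1 w2 : ℝ → ℝ} {a b p q r s : ℕ → ℝ}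

lemma flt (L : Loc δ c K w w1 w2) {x y : ℝ} (hy0 : 0 < y) (hx : x ≤ δ)
    (h : x + w x ≤ y + w y) : x ≤ y := by
  by_contra hh
  push Not at hh
  have := L.mono hy0 hh.le hx
  linarith

lemma sum_u (L : Loc δ c K w w1 w2) (A : Orb w δ a) (N : ℕ) :
    ∑ l ∈ Finset.range N, (w (a (l + 1)) / a (l + 1)) ^ 2 ≤ 2 / c * (w (a 0) / a 0) := by
  have hc := L.cpos
  have key : ∀ N, ∑ l ∈ Finset.range N, (w (a (l + 1)) / a (l + 1)) ^ 2
      ≤ 2 / c * (w (a 0) / a 0 - w (a N) / a N) := by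
    intro N
    induction N with
    | zero => simp
    | succ n ih =>
      rw [Finset.sum_range_succ]
      have h := (L.ustep (A.pos (n + 1)) (A.le (n + 1)) (by rw [A.step]; exact A.le n)).1
      rw [A.step] at h
      have h2 : (w (a (n + 1)) / a (n + 1)) ^ 2 ≤
          2 / c * (w (a n) / a n - w (a (n + 1)) / a (n + 1)) := by
        rw [div_mul_eq_mul_div, le_div_iff₀ hc]; linarith
      have : 2 / c * (w (a 0) / a 0 - w (a (n + 1)) / a (n + 1)) =
        2 / c * (w (a 0) / a 0 - w (a n) / a n) +
          2 / c * (w (a n) / a n - w (a (n + 1)) / a (n + 1)) := by ring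
      linarith
  refine (key N).trans ?_
  gcongr
  have := div_pos (L.wpos _ (A.pos N) (A.le N)) (A.pos N)
  linarith

lemma sum_w (A : Orb w δ a) (N : ℕ) :
    ∑ l ∈ Finset.range N, w (a (l + 1)) = a 0 - a N := by
  induction N with
  | zero => simp
  | succ n ih => rw [Finset.sum_range_succ, ih, ← A.step n]; ring

lemma u_le_one (L : Loc δ c K w w1 w2) {x : ℝ} (h0 : 0 < x) (hx : x ≤ δ) : w x / x ≤ 1 := by
  rw [div_le_one h0]; exact L.wle x h0 hx

lemma orb_le (L : Loc δ c K w w1 w2) (A : Orb w δ a) (B : Orb w δ b) (h : a 0 ≤ b 0) (n : ℕ) :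
    a n ≤ b n := by
  induction n with
  | zero => exact h
  | succ n ih =>
    apply L.flt (B.pos _) (A.le _)
    rw [A.step, B.step]; exact ih

lemma orb_lt (L : Loc δ c K w w1 w2) (A : Orb w δ a) (B : Orb w δ b) (h : a 0 < b 0) (n : ℕ) :
    a n < b n := by
  induction n with
  | zero => exact h
  | succ n ih =>
    have h1 := L.flt (B.pos (n + 1)) (A.le _) (by
      rw [A.step, B.step]; exact ih.le)
    refine lt_of_le_of_ne h1 fun e => ?_
    have h2 := A.step n
    rw [e, B.step] at h2
    linarith

lemma orb_le' (L : Loc δ c K w w1 w2) (A : Orb w δ a) (B : Orb w δ b)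
    (h : b 0 ≤ a 0 + w (a 0)) (n : ℕ) : b (n + 1) ≤ a n := by
  induction n with
  | zero =>
    apply L.flt (A.pos _) (B.le _)
    rw [B.step]; exact h
  | succ n ih =>
    apply L.flt (A.pos _) (B.le _)
    rw [A.step, B.step]; exact ih

lemma orb_mvt (L : Loc δ c K w w1 w2) (A : Orb w δ a) (B : Orb w δ b) (h : a 0 < b 0) (n : ℕ) :
    ∃ ξ, a (n + 1) ≤ ξ ∧ ξ ≤ b (n + 1) ∧
      b n - a n = (b (n + 1) - a (n + 1)) * (1 + w1 ξ) := by
  obtain ⟨ξ, h1, h2, h3⟩ := L.mvt (A.pos (n + 1)) (L.orb_lt A B h (n + 1)) (B.le _)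
  refine ⟨ξ, h1, h2, ?_⟩
  rw [← A.step n, ← B.step n]
  linear_combination h3

lemma w_mvt (L : Loc δ c K w w1 w2) (A : Orb w δ a) (n : ℕ) :
    ∃ ξ, a (n + 1) ≤ ξ ∧ ξ ≤ a n ∧ w (a n) = w (a (n + 1)) * (1 + w1 ξ) := by
  have h0 := L.wpos _ (A.pos (n + 1)) (A.le _)
  have h1 := A.step n
  obtain ⟨ξ, h2, h3, h4⟩ := L.mvt (A.pos (n + 1)) (y := a n) (by linarith) (A.le _)
  refine ⟨ξ, h2, h3, ?_⟩
  rw [← h1] at h4 ⊢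
  linear_combination h4

/-- comparison of an interval with the fundamental one -/
lemma comp (L : Loc δ c K w w1 w2) (A : Orb w δ a) (B : Orb w δ b) (h : a 0 < b 0)
    (h' : b 0 ≤ a 0 + w (a 0)) (n : ℕ) :
    (b n - a n) / w (a n) ≤ Real.exp (16 * K / c) * ((b 0 - a 0) / w (a 0)) ∧
    w (a n) / (b n - a n) ≤ Real.exp (16 * K / c) * (w (a 0) / (b 0 - a 0)) := by
  have hc := L.cpos
  have hK := L.Kpos
  have hw : ∀ n, 0 < w (a n) := fun n => L.wpos _ (A.pos n) (A.le _)
  have hd : ∀ n, 0 < b n - a n := fun n => sub_pos.2 (L.orb_lt A B h n)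
  have hsum : ∀ n, ∑ l ∈ Finset.range n, 8 * K * (w (a (l + 1)) / a (l + 1)) ^ 2 ≤ 16 * K / c := by
    intro n
    rw [← Finset.mul_sum]
    calc _ ≤ 8 * K * (2 / c * 1) := by
          gcongr
          refine (L.sum_u A n).trans ?_
          gcongr
          exact L.u_le_one (A.pos 0) (A.le 0)
      _ = _ := by ring
  have hdist : ∀ n ξ η, a (n + 1) ≤ ξ → ξ ≤ a n → a (n + 1) ≤ η → η ≤ a n →
      |w1 ξ - w1 η| ≤ 8 * K * (w (a (n + 1)) / a (n + 1)) ^ 2 := by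
    intro n ξ η h1 h2 h3 h4
    have hst := A.step n
    refine (L.dist (A.pos (n + 1)) (by rw [hst]; exact A.le n) h1 (by rw [hst]; exact h2) h3
      (by rw [hst]; exact h4)).trans ?_
    have : |ξ - η| ≤ w (a (n + 1)) := by rw [abs_le]; constructor <;> linarith
    have hp := A.pos (n + 1)
    have := hw (n + 1)
    calc _ ≤ 8 * K * (w (a (n + 1)) / a (n + 1) ^ 2) * w (a (n + 1)) := by gcongr
      _ = _ := by field_simp
  have hstep : ∀ n, ∃ ξ η, a (n + 1) ≤ ξ ∧ ξ ≤ a n ∧ a (n + 1) ≤ η ∧ η ≤ a n ∧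
      b n - a n = (b (n + 1) - a (n + 1)) * (1 + w1 ξ) ∧
      w (a n) = w (a (n + 1)) * (1 + w1 η) ∧ 0 ≤ w1 ξ ∧ 0 ≤ w1 η := by
    intro n
    obtain ⟨ξ, h1, h2, h3⟩ := L.orb_mvt A B h n
    obtain ⟨η, h4, h5, h6⟩ := L.w_mvt A n
    have h7 := h2.trans (L.orb_le' A B h' n)
    exact ⟨ξ, η, h1, h7, h4, h5, h3, h6,
      (L.w1pos ((A.pos _).trans_le h1) (h7.trans (A.le _))).le,
      (L.w1pos ((A.pos _).trans_le h4) (h5.trans (A.le _))).le⟩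
  constructor
  · refine (exp_tele (fun n => (b n - a n) / w (a n))
      (fun l => 8 * K * (w (a (l + 1)) / a (l + 1)) ^ 2) ?_ n).trans ?_
    · intro n
      obtain ⟨ξ, η, h1, h2, h3, h4, h5, h6, h7, h8⟩ := hstep n
      have h9 := one_add_le_exp_mul h7 (hdist n η ξ h3 h4 h1 h2)
      rw [h5, h6, mul_div_assoc', div_le_div_iff₀ (hw _) (mul_pos (hw _) (by linarith))]
      have := mul_pos (hd (n + 1)) (hw (n + 1))
      calc _ = ((b (n + 1) - a (n + 1)) * w (a (n + 1))) * (1 + w1 η) := by ring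
        _ ≤ ((b (n + 1) - a (n + 1)) * w (a (n + 1))) * _ := mul_le_mul_of_nonneg_left h9 this.le
        _ = _ := by ring
    · have := div_pos (hd 0) (hw 0)
      gcongr; exact hsum n
  · refine (exp_tele (fun n => w (a n) / (b n - a n))
      (fun l => 8 * K * (w (a (l + 1)) / a (l + 1)) ^ 2) ?_ n).trans ?_
    · intro n
      obtain ⟨ξ, η, h1, h2, h3, h4, h5, h6, h7, h8⟩ := hstep n
      have h9 := one_add_le_exp_mul h8 (hdist n ξ η h1 h2 h3 h4)
      rw [h5, h6, mul_div_assoc', div_le_div_iff₀ (hd _) (mul_pos (hd _) (by linarith))]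
      have := mul_pos (hd (n + 1)) (hw (n + 1))
      calc _ = ((b (n + 1) - a (n + 1)) * w (a (n + 1))) * (1 + w1 ξ) := by ring
        _ ≤ ((b (n + 1) - a (n + 1)) * w (a (n + 1))) * _ := mul_le_mul_of_nonneg_left h9 this.le
        _ = _ := by ring
    · have := div_pos (hw 0) (hd 0)
      gcongr; exact hsum n

/-- distortion estimate for two subintervals of `[a 0, b 0]` -/
lemma comp4 (L : Loc δ c K w w1 w2) (A : Orb w δ a) (B : Orb w δ b) (P : Orb w δ p)
    (Q : Orb w δ q) (R : Orb w δ r) (S : Orb w δ s) (h : a 0 < b 0)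
    (h' : b 0 ≤ a 0 + w (a 0)) (hap : a 0 ≤ p 0) (hpq : p 0 < q 0) (hqb : q 0 ≤ b 0)
    (har : a 0 ≤ r 0) (hrs : r 0 < s 0) (hsb : s 0 ≤ b 0) (n : ℕ) :
    (q n - p n) / (s n - r n) ≤
      Real.exp (16 * K / c * Real.exp (16 * K / c) * ((b 0 - a 0) / a 0)) *
        ((q 0 - p 0) / (s 0 - r 0)) := by
  have hc := L.cpos
  have hK := L.Kpos
  have hw : ∀ n, 0 < w (a n) := fun n => L.wpos _ (A.pos n) (A.le _)
  have hd : ∀ n, 0 < q n - p n := fun n => sub_pos.2 (L.orb_lt P Q hpq n)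
  have hd' : ∀ n, 0 < s n - r n := fun n => sub_pos.2 (L.orb_lt R S hrs n)
  have hd0 : 0 < b 0 - a 0 := sub_pos.2 h
  set D := Real.exp (16 * K / c) with hD
  have hDp : 0 < D := Real.exp_pos _
  set e : ℕ → ℝ := fun l => 8 * K * D * ((b 0 - a 0) / w (a 0)) * (w (a (l + 1)) / a (l + 1)) ^ 2
    with he
  have hsum : ∑ l ∈ Finset.range n, e l ≤ 16 * K / c * D * ((b 0 - a 0) / a 0) := by
    rw [he, ← Finset.mul_sum]
    have h0 := hw 0
    have ha := A.pos 0
    calc _ ≤ 8 * K * D * ((b 0 - a 0) / w (a 0)) * (2 / c * (w (a 0) / a 0)) := by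
          gcongr
          exact L.sum_u A n
      _ = _ := by field_simp; ring
  refine (exp_tele (fun n => (q n - p n) / (s n - r n)) e ?_ n).trans ?_
  · intro n
    obtain ⟨ξ, h1, h2, h3⟩ := L.orb_mvt P Q hpq n
    obtain ⟨η, h4, h5, h6⟩ := L.orb_mvt R S hrs n
    have i1 := L.orb_le A P hap (n + 1)
    have i2 := L.orb_le Q B hqb (n + 1)
    have i3 := L.orb_le A R har (n + 1)
    have i4 := L.orb_le S B hsb (n + 1)
    have i5 := L.orb_le' A B h' n
    have hst := A.step n
    have hp := A.pos (n + 1)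
    have hwn := hw (n + 1)
    have hle := A.le n
    have h7 : 0 ≤ w1 ξ := (L.w1pos (by linarith) (by linarith)).le
    have h8 : 0 ≤ w1 η := (L.w1pos (by linarith) (by linarith)).le
    have hdist : |w1 η - w1 ξ| ≤ e n := by
      refine (L.dist hp (by linarith) (by linarith) (by linarith) (by linarith)
        (by linarith)).trans ?_
      have h9 : |η - ξ| ≤ b (n + 1) - a (n + 1) := by
        rw [abs_le]; constructor <;> linarith
      have h10 := (L.comp A B h h' (n + 1)).1
      rw [div_le_iff₀ hwn] at h10
      calc _ ≤ 8 * K * (w (a (n + 1)) / a (n + 1) ^ 2) *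
            (D * ((b 0 - a 0) / w (a 0)) * w (a (n + 1))) := by gcongr; exact h9.trans h10
        _ = _ := by rw [he]; field_simp
    have h9 := one_add_le_exp_mul h7 hdist
    rw [h3, h6, mul_div_assoc', div_le_div_iff₀ (hd' _) (mul_pos (hd' _) (by linarith))]
    have := mul_pos (hd (n + 1)) (hd' (n + 1))
    calc _ = ((q (n + 1) - p (n + 1)) * (s (n + 1) - r (n + 1))) * (1 + w1 η) := by ring
      _ ≤ ((q (n + 1) - p (n + 1)) * (s (n + 1) - r (n + 1))) * _ := mul_le_mul_of_nonneg_left h9 this.le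
      _ = _ := by ring
  · have := div_pos (hd 0) (hd' 0)
    gcongr

/-- `1/u` grows linearly along orbits -/
lemma inv_u (L : Loc δ c K w w1 w2) (A : Orb w δ a) (n : ℕ) :
    a 0 / w (a 0) + c / 16 * n ≤ a n / w (a n) ∧ a n / w (a n) ≤ a 0 / w (a 0) + 16 * n := by
  have hc := L.cpos
  induction n with
  | zero => simp
  | succ n ih =>
    have hst := A.step n
    have h := L.ustep (A.pos (n + 1)) (A.le (n + 1)) (by rw [hst]; exact A.le n)
    have hw := L.wpos _ (A.pos n) (A.le n)
    have hw' := L.wpos _ (A.pos (n + 1)) (A.le (n + 1))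
    have hp := A.pos n
    have hp' := A.pos (n + 1)
    rw [hst] at h
    have hd := L.doubling hp' (y := a n) (by linarith) (A.le n) (by
      linarith [L.wle _ hp' (A.le (n + 1))])
    have hu : w (a n) / a n ≤ 8 * (w (a (n + 1)) / a (n + 1)) := by
      rw [div_le_iff₀ hp]
      refine hd.trans ?_
      have : a (n + 1) ≤ a n := by linarith
      calc 8 * w (a (n + 1)) = 8 * (w (a (n + 1)) / a (n + 1)) * a (n + 1) := by field_simp
        _ ≤ _ := by gcongr
    rw [← inv_div (w (a (n + 1))), ← inv_div (w (a n)) (a n)] at *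
    rw [← inv_div (w (a 0))] at *
    set U := w (a (n + 1)) / a (n + 1)
    set V := w (a n) / a n
    have hU : 0 < U := div_pos hw' hp'
    have hV : 0 < V := div_pos hw hp
    have hUV : U ≤ V := by nlinarith [sq_nonneg U]
    have e : U⁻¹ - V⁻¹ = (V - U) / (U * V) := by field_simp
    have h1 : c / 16 ≤ U⁻¹ - V⁻¹ := by
      rw [e, le_div_iff₀ (by positivity)]
      refine le_trans ?_ h.1
      calc c / 16 * (U * V) ≤ c / 16 * (U * (8 * U)) := by gcongr
        _ = _ := by ring
    have h2 : U⁻¹ - V⁻¹ ≤ 16 := by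
      rw [e, div_le_iff₀ (by positivity)]
      refine h.2.trans ?_
      rw [sq]; gcongr
    push_cast
    constructor <;> linarith [ih.1, ih.2]

end Loc
lemma int_le {h : ℝ → ℝ} {p q M : ℝ} (hpq : p ≤ q) (hc : ContinuousOn h (Icc p q))
    (hM : ∀ x ∈ Icc p q, h x ≤ M) : ∫ x in p..q, h x ≤ M * (q - p) := by
  have := intervalIntegral.integral_mono_on (μ := volume) hpq
    (hc.intervalIntegrable_of_Icc hpq) (intervalIntegrable_const (c := M)) hM
  simpa [mul_comm] using this

lemma le_int {h : ℝ → ℝ} {p q M : ℝ} (hpq : p ≤ q) (hc : ContinuousOn h (Icc p q))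
    (hM : ∀ x ∈ Icc p q, M ≤ h x) : M * (q - p) ≤ ∫ x in p..q, h x := by
  have := intervalIntegral.integral_mono_on (μ := volume) hpq
    (intervalIntegrable_const (c := M)) (hc.intervalIntegrable_of_Icc hpq) hM
  simpa [mul_comm] using this

lemma int_comp {h : ℝ → ℝ} {α β E p q r s : ℝ} (hc : ContinuousOn h (Icc α β))
    (hE : ∀ x ∈ Icc α β, ∀ y ∈ Icc α β, h x ≤ E * h y) (hp : α ≤ p) (hpq : p < q) (hq : q ≤ β)
    (hr : α ≤ r) (hrs : r < s) (hs : s ≤ β) :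
    (∫ x in p..q, h x) * (s - r) ≤ E * (∫ x in r..s, h x) * (q - p) := by
  have h1 : ∀ y ∈ Icc r s, (∫ x in p..q, h x) / (q - p) ≤ E * h y := by
    intro y hy
    rw [div_le_iff₀ (by linarith)]
    exact int_le hpq.le (hc.mono (Icc_subset_Icc hp hq))
      (fun x hx => hE x ⟨hp.trans hx.1, hx.2.trans hq⟩ y ⟨hr.trans hy.1, hy.2.trans hs⟩)
  have h2 := le_int (h := fun y => E * h y) hrs.le
    (continuousOn_const.mul (hc.mono (Icc_subset_Icc hr hs))) h1
  rw [intervalIntegral.integral_const_mul, div_mul_eq_mul_div, div_le_iff₀ (by linarith)] at h2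
  exact h2

lemma small_int {h : ℝ → ℝ} {α β x ε : ℝ} (hαβ : α < β) (hc : ContinuousOn h (Icc α β))
    (hx : x ∈ Icc α β) (hε : 0 < ε) :
    ∃ p q, α ≤ p ∧ p < q ∧ q ≤ β ∧ ∀ y ∈ Icc p q, |h y - h x| ≤ ε := by
  obtain ⟨d, hd, H⟩ := Metric.continuousOn_iff.1 hc x hx ε hε
  refine ⟨max α (x - d / 2), min β (x + d / 2), le_max_left _ _, ?_, min_le_left _ _, ?_⟩
  · rcases hx with ⟨h1, h2⟩
    rw [max_lt_iff, lt_min_iff, lt_min_iff]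
    refine ⟨⟨hαβ, by linarith⟩, by linarith, by linarith⟩
  · intro y hy
    have h1 := hy.1
    have h2 := hy.2
    rw [max_le_iff] at h1
    rw [le_min_iff] at h2
    have := H y ⟨h1.1, h2.1⟩ (by rw [Real.dist_eq, abs_lt]; constructor <;> linarith)
    rw [Real.dist_eq] at this
    exact this.le

lemma pt_comp {h : ℝ → ℝ} {α β E : ℝ} (hαβ : α < β) (hc : ContinuousOn h (Icc α β)) (hE : 0 ≤ E)
    (H : ∀ p q r s, α ≤ p → p < q → q ≤ β → α ≤ r → r < s → s ≤ β →
      (∫ x in p..q, h x) * (s - r) ≤ E * (∫ x in r..s, h x) * (q - p)) :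
    ∀ x ∈ Icc α β, ∀ y ∈ Icc α β, h x ≤ E * h y := by
  intro x hx y hy
  apply le_of_forall_pos_le_add
  intro ε hε
  have hη : 0 < ε / (1 + E) := by positivity
  set η := ε / (1 + E) with hηd
  obtain ⟨p, q, h1, h2, h3, h4⟩ := small_int hαβ hc hx hη
  obtain ⟨r, s, h5, h6, h7, h8⟩ := small_int hαβ hc hy hη
  have i := H p q r s h1 h2 h3 h5 h6 h7
  have i1 := le_int h2.le (hc.mono (Icc_subset_Icc h1 h3)) (M := h x - η)
    (fun t ht => by have := (abs_le.1 (h4 t ht)).1; linarith)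
  have i2 := int_le h6.le (hc.mono (Icc_subset_Icc h5 h7)) (M := h y + η)
    (fun t ht => by have := (abs_le.1 (h8 t ht)).2; linarith)
  have hqp : 0 < q - p := by linarith
  have hsr : 0 < s - r := by linarith
  have i3 : (h x - η) * ((q - p) * (s - r)) ≤ (E * (h y + η)) * ((q - p) * (s - r)) := by
    calc _ = (h x - η) * (q - p) * (s - r) := by ring
      _ ≤ (∫ x in p..q, h x) * (s - r) := by gcongr
      _ ≤ _ := i
      _ ≤ E * ((h y + η) * (s - r)) * (q - p) := by gcongr
      _ = _ := by ring
  have i4 := le_of_mul_le_mul_right i3 (by positivity)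
  have : η * (1 + E) = ε := by rw [hηd]; field_simp
  linarith

lemma pt_le {h : ℝ → ℝ} {α β M : ℝ} (hαβ : α < β) (hc : ContinuousOn h (Icc α β))
    (H : ∀ p q, α ≤ p → p < q → q ≤ β → ∫ x in p..q, h x ≤ M * (q - p)) :
    ∀ x ∈ Icc α β, h x ≤ M := by
  intro x hx
  apply le_of_forall_pos_le_add
  intro ε hε
  obtain ⟨p, q, h1, h2, h3, h4⟩ := small_int hαβ hc hx hε
  have i1 := le_int h2.le (hc.mono (Icc_subset_Icc h1 h3)) (M := h x - ε)
    (fun t ht => by have := (abs_le.1 (h4 t ht)).1; linarith)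
  have := le_of_mul_le_mul_right (i1.trans (H p q h1 h2 h3)) (by linarith)
  linarith

lemma le_pt {h : ℝ → ℝ} {α β M : ℝ} (hαβ : α < β) (hc : ContinuousOn h (Icc α β))
    (H : ∀ p q, α ≤ p → p < q → q ≤ β → M * (q - p) ≤ ∫ x in p..q, h x) :
    ∀ x ∈ Icc α β, M ≤ h x := by
  intro x hx
  apply le_of_forall_pos_le_add
  intro ε hε
  obtain ⟨p, q, h1, h2, h3, h4⟩ := small_int hαβ hc hx hε
  have i1 := int_le h2.le (hc.mono (Icc_subset_Icc h1 h3)) (M := h x + ε)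
    (fun t ht => by have := (abs_le.1 (h4 t ht)).2; linarith)
  exact le_of_mul_le_mul_right ((H p q h1 h2 h3).trans i1) (by linarith)

/-- Data of the invariant density. -/
structure DInv (δ m M Λ : ℝ) (w h : ℝ → ℝ) : Prop where
  dle : δ ≤ 1 / 2
  mpos : 0 < m
  Lpos : 0 ≤ Λ
  cont : ContinuousOn h (Ioc 0 1)
  lo : ∀ x ∈ Icc (1 / 2 : ℝ) 1, m ≤ h x
  hi : ∀ x ∈ Icc (1 / 2 : ℝ) 1, h x ≤ M
  lip : ∀ x ∈ Icc (1 / 2 : ℝ) 1, ∀ y ∈ Icc (1 / 2 : ℝ) 1, |h x - h y| ≤ Λ * |x - y|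
  nonneg : ∀ x ∈ Ioc (0 : ℝ) 1, 0 ≤ h x
  inv : ∀ s t, 0 < s → s < t → t ≤ δ → t + w t ≤ δ → ∫ x in (s + w s)..(t + w t), h x =
    (∫ x in s..t, h x) + ∫ x in ((1 + (s + w s)) / 2)..((1 + (t + w t)) / 2), h x
  ex : ∀ x, 0 < x → x ≤ δ → ∃ a, Orb w δ a ∧ a 0 = x
  zero : ∀ a, Orb w δ a → Tendsto a atTop (𝓝 0)
  tail : ∀ a b, Orb w δ a → Orb w δ b → Tendsto (fun n => ∫ x in (a n)..(b n), h x) atTop (𝓝 0)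

namespace DInv

variable {δ c K m M Λ : ℝ} {w w1 w2 h : ℝ → ℝ} {a b p q r s : ℕ → ℝ}

lemma iter (I : DInv δ m M Λ w h) (L : Loc δ c K w w1 w2) (A : Orb w δ a) (B : Orb w δ b)
    (hab : a 0 < b 0) (N : ℕ) :
    ∫ x in (a 0)..(b 0), h x = (∑ k ∈ Finset.range N,
      ∫ x in ((1 + a k) / 2)..((1 + b k) / 2), h x) + ∫ x in (a N)..(b N), h x := by
  induction N with
  | zero => simp
  | succ n ih =>
    have := I.inv (a (n + 1)) (b (n + 1)) (A.pos _) (L.orb_lt A B hab _) (B.le _)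
      (by rw [B.step]; exact B.le n)
    rw [A.step, B.step] at this
    rw [ih, Finset.sum_range_succ, this]; ring

lemma half_mem (I : DInv δ m M Λ w h) {x : ℝ} (h0 : 0 < x) (h1 : x ≤ δ) :
    (1 + x) / 2 ∈ Icc (1 / 2 : ℝ) 1 := by
  have := I.dle
  constructor <;> linarith

lemma width (L : Loc δ c K w w1 w2) (A : Orb w δ a) (B : Orb w δ b)
    (hab : a 0 < b 0) (n : ℕ) : b n - a n ≤ b 0 - a 0 := by
  induction n with
  | zero => rfl
  | succ n ih =>
    have := L.mono (A.pos (n + 1)) (L.orb_lt A B hab (n + 1)).le (B.le _)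
    have h1 := A.step n
    have h2 := B.step n
    linarith

lemma main_comp (I : DInv δ m M Λ w h) (L : Loc δ c K w w1 w2) {α β : ℝ} (h0 : 0 < α)
    (hαβ : α < β) (hβ : β ≤ δ) (hβ' : β ≤ α + w α) :
    ∀ x ∈ Icc α β, ∀ y ∈ Icc α β, h x ≤
      Real.exp ((16 * K / c * Real.exp (16 * K / c) + Λ / m) * ((β - α) / α)) * h y := by
  have hm := I.mpos
  have hL := I.Lpos
  have hδ := I.dle
  have hcs : ∀ {u v : ℝ}, 0 < u → v ≤ 1 → ContinuousOn h (Icc u v) := fun hu hv =>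
    I.cont.mono (fun t ht => ⟨hu.trans_le ht.1, ht.2.trans hv⟩)
  apply pt_comp hαβ (hcs h0 (by linarith)) (Real.exp_pos _).le
  intro p0 q0 r0 s0 h1 h2 h3 h4 h5 h6
  obtain ⟨a, A, ha⟩ := I.ex α h0 (by linarith)
  obtain ⟨b, B, hb⟩ := I.ex β (by linarith) (by linarith)
  obtain ⟨p, P, hp⟩ := I.ex p0 (by linarith) (by linarith)
  obtain ⟨q, Q, hq⟩ := I.ex q0 (by linarith) (by linarith)
  obtain ⟨r, R, hr⟩ := I.ex r0 (by linarith) (by linarith)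
  obtain ⟨s, S, hs⟩ := I.ex s0 (by linarith) (by linarith)
  have hC := L.comp4 A B P Q R S (by rw [ha, hb]; exact hαβ) (by rw [ha, hb]; exact hβ')
    (by rw [ha, hp]; exact h1) (by rw [hp, hq]; exact h2) (by rw [hq, hb]; exact h3)
    (by rw [ha, hr]; exact h4) (by rw [hr, hs]; exact h5) (by rw [hs, hb]; exact h6)
  set E1 := Real.exp (16 * K / c * Real.exp (16 * K / c) * ((b 0 - a 0) / a 0)) with hE1
  set E2 := Real.exp (Λ / m * ((b 0 - a 0) / a 0)) with hE2
  have hEE : Real.exp ((16 * K / c * Real.exp (16 * K / c) + Λ / m) * ((β - α) / α)) = E2 * E1 := by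
    rw [hE1, hE2, ← Real.exp_add, ha, hb]; congr 1; ring
  rw [hEE]
  have hE1p : 0 < E1 := Real.exp_pos _
  have hE2p : 0 < E2 := Real.exp_pos _
  have hterm : ∀ k, (∫ x in ((1 + p k) / 2)..((1 + q k) / 2), h x) * (s 0 - r 0) ≤
      E2 * E1 * (∫ x in ((1 + r k) / 2)..((1 + s k) / 2), h x) * (q 0 - p 0) := by
    intro k
    have j1 := L.orb_le A P (by rw [ha, hp]; exact h1) k
    have j2 := L.orb_lt P Q (by rw [hp, hq]; exact h2) k
    have j3 := L.orb_le Q B (by rw [hq, hb]; exact h3) k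
    have j4 := L.orb_le A R (by rw [ha, hr]; exact h4) k
    have j5 := L.orb_lt R S (by rw [hr, hs]; exact h5) k
    have j6 := L.orb_le S B (by rw [hs, hb]; exact h6) k
    have ma := I.half_mem (A.pos k) (A.le k)
    have mb := I.half_mem (B.pos k) (B.le k)
    have hwid := width L A B (by rw [ha, hb]; exact hαβ) k
    have hE : ∀ x ∈ Icc ((1 + a k) / 2) ((1 + b k) / 2), ∀ y ∈ Icc ((1 + a k) / 2) ((1 + b k) / 2),
        h x ≤ E2 * h y := by
      intro x hx y hy
      have mx : x ∈ Icc (1 / 2 : ℝ) 1 := ⟨ma.1.trans hx.1, hx.2.trans mb.2⟩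
      have my : y ∈ Icc (1 / 2 : ℝ) 1 := ⟨ma.1.trans hy.1, hy.2.trans mb.2⟩
      have k1 := I.lip x mx y my
      have k2 := I.lo y my
      have k3 : |x - y| ≤ b 0 - a 0 := by
        rw [abs_le]; constructor <;> linarith [hx.1, hx.2, hy.1, hy.2, L.orb_lt A B (by rw [ha, hb]; exact hαβ) k]
      have k4 : b 0 - a 0 ≤ (b 0 - a 0) / a 0 := by
        rw [le_div_iff₀ (A.pos 0)]
        have := A.le 0
        nlinarith
      have k5 := Real.add_one_le_exp (Λ / m * ((b 0 - a 0) / a 0))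
      have k6 : h x ≤ h y + Λ * ((b 0 - a 0) / a 0) := by
        have := (abs_le.1 k1).2
        have : Λ * |x - y| ≤ Λ * ((b 0 - a 0) / a 0) := by gcongr; exact k3.trans k4
        linarith
      have k7 : 0 ≤ Λ / m * ((b 0 - a 0) / a 0) := by
        have := A.pos 0
        have : 0 < b 0 - a 0 := by linarith
        positivity
      have k8 : Λ * ((b 0 - a 0) / a 0) = Λ / m * ((b 0 - a 0) / a 0) * m := by field_simp
      calc h x ≤ h y + Λ / m * ((b 0 - a 0) / a 0) * m := by rw [← k8]; exact k6
        _ ≤ h y + Λ / m * ((b 0 - a 0) / a 0) * h y := by gcongr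
        _ = (Λ / m * ((b 0 - a 0) / a 0) + 1) * h y := by ring
        _ ≤ _ := by gcongr; linarith
    have hic := int_comp (hcs (by linarith [ma.1]) mb.2) hE (p := (1 + p k) / 2) (q := (1 + q k) / 2)
      (r := (1 + r k) / 2) (s := (1 + s k) / 2) (by linarith) (by linarith) (by linarith)
      (by linarith) (by linarith) (by linarith)
    have hQn : 0 ≤ ∫ x in ((1 + r k) / 2)..((1 + s k) / 2), h x := by
      have mr := I.half_mem (R.pos k) (R.le k)
      have ms := I.half_mem (S.pos k) (S.le k)
      apply intervalIntegral.integral_nonneg (by linarith)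
      intro t ht
      exact hm.le.trans (I.lo t ⟨mr.1.trans ht.1, ht.2.trans ms.2⟩)
    have hck := hC k
    have d1 : 0 < s k - r k := by linarith
    have d2 : 0 < s 0 - r 0 := by linarith
    rw [mul_div_assoc', div_le_div_iff₀ d1 d2] at hck
    set X := ∫ x in ((1 + p k) / 2)..((1 + q k) / 2), h x
    set Y := ∫ x in ((1 + r k) / 2)..((1 + s k) / 2), h x
    have e1 : X * (s k - r k) ≤ E2 * Y * (q k - p k) := by linarith
    have e2 : (X * (s 0 - r 0)) * (s k - r k) ≤ (E2 * E1 * Y * (q 0 - p 0)) * (s k - r k) := by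
      calc _ = (X * (s k - r k)) * (s 0 - r 0) := by ring
        _ ≤ (E2 * Y * (q k - p k)) * (s 0 - r 0) := by gcongr
        _ = (E2 * Y) * ((q k - p k) * (s 0 - r 0)) := by ring
        _ ≤ (E2 * Y) * (E1 * (q 0 - p 0) * (s k - r k)) := by gcongr
        _ = _ := by ring
    exact le_of_mul_le_mul_right e2 d1
  have hN : ∀ N, ((∫ x in (p 0)..(q 0), h x) - ∫ x in (p N)..(q N), h x) * (s 0 - r 0) ≤
      E2 * E1 * (∫ x in (r 0)..(s 0), h x) * (q 0 - p 0) := by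
    intro N
    have hnn : 0 ≤ ∫ x in (r N)..(s N), h x := by
      apply intervalIntegral.integral_nonneg (L.orb_le R S (by linarith) N)
      intro t ht
      exact I.nonneg t ⟨(R.pos N).trans_le ht.1, by linarith [ht.2, S.le N]⟩
    rw [I.iter L P Q (by rw [hp, hq]; exact h2) N, add_sub_cancel_right]
    have : ∑ k ∈ Finset.range N, ∫ x in ((1 + r k) / 2)..((1 + s k) / 2), h x ≤
        ∫ x in (r 0)..(s 0), h x := by
      rw [I.iter L R S (by rw [hr, hs]; exact h5) N]; linarith
    have hqp : 0 ≤ q 0 - p 0 := by linarith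
    calc _ ≤ E2 * E1 * (∑ k ∈ Finset.range N, ∫ x in ((1 + r k) / 2)..((1 + s k) / 2), h x)
          * (q 0 - p 0) := by
          rw [Finset.sum_mul, Finset.mul_sum, Finset.sum_mul]
          exact Finset.sum_le_sum fun k _ => hterm k
      _ ≤ _ := by gcongr
  have hlim : Tendsto (fun N => ((∫ x in (p 0)..(q 0), h x) - ∫ x in (p N)..(q N), h x) * (s 0 - r 0))
      atTop (𝓝 (((∫ x in (p 0)..(q 0), h x) - 0) * (s 0 - r 0))) :=
    (tendsto_const_nhds.sub (I.tail p q P Q)).mul_const _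
  have := le_of_tendsto' hlim hN
  rw [hp, hq, hr, hs, sub_zero] at this
  exact this

lemma main_bd (I : DInv δ m M Λ w h) (L : Loc δ c K w w1 w2) {α β : ℝ} (h0 : 0 < α)
    (hαβ : α < β) (hβ : β ≤ δ) (hβ' : β ≤ α + w α) :
    ∀ x ∈ Icc α β, m / 2 / Real.exp (16 * K / c) * (β / w β) ≤ h x ∧
      h x ≤ M * Real.exp (16 * K / c) * (α / w α) := by
  have hm := I.mpos
  have hδ := I.dle
  have hM : 0 < M := hm.trans_le ((I.lo 1 (by constructor <;> norm_num)).trans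
    (I.hi 1 (by constructor <;> norm_num)))
  set D := Real.exp (16 * K / c) with hD
  have hDp : 0 < D := Real.exp_pos _
  have hcs : ∀ {u v : ℝ}, 0 < u → v ≤ 1 → ContinuousOn h (Icc u v) := fun hu hv =>
    I.cont.mono (fun t ht => ⟨hu.trans_le ht.1, ht.2.trans hv⟩)
  have hall : ∀ p0 q0, α ≤ p0 → p0 < q0 → q0 ≤ β →
      m / 2 / D * (β / w β) * (q0 - p0) ≤ ∫ x in p0..q0, h x ∧
      ∫ x in p0..q0, h x ≤ M * D * (α / w α) * (q0 - p0) := by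
    intro p0 q0 h1 h2 h3
    obtain ⟨p, P, hp⟩ := I.ex p0 (by linarith) (by linarith)
    obtain ⟨q, Q, hq⟩ := I.ex q0 (by linarith) (by linarith)
    have hpq : p 0 < q 0 := by rw [hp, hq]; exact h2
    have hpp := P.pos 0
    have hw0 := L.wpos _ (P.pos 0) (P.le 0)
    have hd0 : 0 < q 0 - p 0 := by linarith
    have hwm := L.mono h0 h1 (by linarith)
    have hC := L.comp P Q hpq (by rw [hp, hq]; linarith)
    have hk : ∀ k, m / 2 / D * ((q 0 - p 0) / w (p 0)) * w (p k) ≤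
          (∫ x in ((1 + p k) / 2)..((1 + q k) / 2), h x) ∧
        (∫ x in ((1 + p k) / 2)..((1 + q k) / 2), h x) ≤
          M / 2 * D * ((q 0 - p 0) / w (p 0)) * w (p k) := by
      intro k
      have j2 := L.orb_lt P Q hpq k
      have mp := I.half_mem (P.pos k) (P.le k)
      have mq := I.half_mem (Q.pos k) (Q.le k)
      have hwk := L.wpos _ (P.pos k) (P.le k)
      have hdk : 0 < q k - p k := by linarith
      obtain ⟨c1, c2⟩ := hC k
      have l1 := le_int (M := m) (h := h) (p := (1 + p k) / 2) (q := (1 + q k) / 2) (by linarith)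
        (hcs (by linarith [mp.1]) mq.2) (fun t ht => I.lo t ⟨mp.1.trans ht.1, ht.2.trans mq.2⟩)
      have l2 := int_le (M := M) (h := h) (p := (1 + p k) / 2) (q := (1 + q k) / 2) (by linarith)
        (hcs (by linarith [mp.1]) mq.2) (fun t ht => I.hi t ⟨mp.1.trans ht.1, ht.2.trans mq.2⟩)
      rw [div_le_iff₀ hwk] at c1
      rw [div_le_iff₀ hdk] at c2
      constructor
      · refine le_trans ?_ l1
        calc _ ≤ m / 2 / D * ((q 0 - p 0) / w (p 0)) * (D * (w (p 0) / (q 0 - p 0)) * (q k - p k)) := by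
              gcongr
          _ = _ := by field_simp; ring
      · refine l2.trans ?_
        calc _ = M / 2 * (q k - p k) := by ring
          _ ≤ M / 2 * (D * ((q 0 - p 0) / w (p 0)) * w (p k)) := by gcongr
          _ = _ := by ring
    have hupper : ∀ N, (∫ x in (p 0)..(q 0), h x) - (∫ x in (p (N + 1))..(q (N + 1)), h x) ≤
        M * D * (α / w α) * (q 0 - p 0) := by
      intro N
      rw [I.iter L P Q hpq (N + 1), add_sub_cancel_right]
      calc _ ≤ ∑ k ∈ Finset.range (N + 1), M / 2 * D * ((q 0 - p 0) / w (p 0)) * w (p k) :=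
            Finset.sum_le_sum fun k _ => (hk k).2
        _ = M / 2 * D * ((q 0 - p 0) / w (p 0)) * (p 0 - p N + w (p 0)) := by
            rw [← Finset.mul_sum, Finset.sum_range_succ', Loc.sum_w P N]
        _ ≤ M / 2 * D * ((q 0 - p 0) / w (p 0)) * (2 * p 0) := by
            gcongr
            linarith [P.pos N, L.wle _ (P.pos 0) (P.le 0)]
        _ = M * D * (p 0 / w (p 0)) * (q 0 - p 0) := by ring
        _ ≤ _ := by
            gcongr ?_ * ?_ * ?_ * ?_
            rw [← inv_div (w (p 0)), ← inv_div (w α)]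
            have := L.wpos α h0 (by linarith)
            apply inv_anti₀ (by positivity)
            rw [hp]
            exact L.umono h0 h1 (by linarith)
    have hlower : ∀ N, m / 2 / D * ((q 0 - p 0) / w (p 0)) * (p 0 - p N) ≤
        (∫ x in (p 0)..(q 0), h x) := by
      intro N
      have hnn : 0 ≤ ∫ x in (p (N + 1))..(q (N + 1)), h x := by
        apply intervalIntegral.integral_nonneg (L.orb_le P Q hpq.le _)
        intro t ht
        exact I.nonneg t ⟨(P.pos _).trans_le ht.1, by linarith [ht.2, Q.le (N + 1)]⟩
      calc _ ≤ m / 2 / D * ((q 0 - p 0) / w (p 0)) * (p 0 - p N + w (p 0)) := by gcongr; linarith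
        _ = ∑ k ∈ Finset.range (N + 1), m / 2 / D * ((q 0 - p 0) / w (p 0)) * w (p k) := by
            rw [← Finset.mul_sum, Finset.sum_range_succ', Loc.sum_w P N]
        _ ≤ ∑ k ∈ Finset.range (N + 1), (∫ x in ((1 + p k) / 2)..((1 + q k) / 2), h x) :=
            Finset.sum_le_sum fun k _ => (hk k).1
        _ ≤ _ := by rw [I.iter L P Q hpq (N + 1)]; linarith
    have t1 := le_of_tendsto' ((tendsto_const_nhds (x := ∫ x in (p 0)..(q 0), h x)).sub
      ((tendsto_add_atTop_iff_nat 1).2 (I.tail p q P Q))) hupper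
    have t2 := le_of_tendsto' (((tendsto_const_nhds (x := p 0)).sub (I.zero p P)).const_mul
      (m / 2 / D * ((q 0 - p 0) / w (p 0)))) hlower
    rw [hp, hq, sub_zero] at t1 t2
    refine ⟨le_trans ?_ t2, t1⟩
    have hwp : 0 < w p0 := hp ▸ hw0
    calc _ ≤ m / 2 / D * (p0 / w p0) * (q0 - p0) := by
          have : 0 ≤ q0 - p0 := by linarith
          gcongr ?_ * ?_ * ?_
          rw [← inv_div (w p0), ← inv_div (w β)]
          have : 0 < p0 := by linarith
          apply inv_anti₀ (by positivity)
          exact L.umono (by linarith) (by linarith) (by linarith)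
      _ = _ := by ring
  intro x hx
  exact ⟨le_pt hαβ (hcs h0 (by linarith)) (fun p q a b c => (hall p q a b c).1) x hx,
    pt_le hαβ (hcs h0 (by linarith)) (fun p q a b c => (hall p q a b c).2) x hx⟩

end DInv
lemma ev_le_of {g : ℝ → ℝ} {s : Set ℝ} {B : ENNReal}
    (H : ∀ a ∈ s, ∀ b ∈ s, a ≤ b → eVariationOn g (s ∩ Icc a b) ≤ B) : eVariationOn g s ≤ B := by
  apply iSup_le
  rintro ⟨n, u, hu, us⟩
  refine le_trans ?_ (H (u 0) (us 0) (u n) (us n) (hu (Nat.zero_le n)))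
  exact eVariationOn.sum_le_of_monotoneOn_Iic (f := g) (n := n) (u := u) (hu.monotoneOn _)
    (fun i hi => ⟨us i, hu (Nat.zero_le i), hu hi⟩)

lemma ev_neg (g : ℝ → ℝ) (s : Set ℝ) : eVariationOn (fun x => - g x) s = eVariationOn g s := by
  unfold eVariationOn
  simp only [edist_neg_neg]

lemma ev_lip {g : ℝ → ℝ} {a b B : ℝ} (hB : 0 ≤ B)
    (H : ∀ x ∈ Icc a b, ∀ y ∈ Icc a b, |g x - g y| ≤ B * |x - y|) :
    eVariationOn g (Icc a b) ≤ ENNReal.ofReal (B * (b - a)) := by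
  have h1 : LipschitzOnWith (Real.toNNReal B) g (Icc a b) := by
    apply LipschitzOnWith.of_dist_le_mul
    intro x hx y hy
    rw [Real.dist_eq, Real.dist_eq, Real.coe_toNNReal _ hB]
    exact H x hx y hy
  have h2 := h1.comp_eVariationOn_le (g := id) (s := Icc a b) (fun x hx => hx)
  have h3 := (eVariationOn_id_Icc a b).le
  rw [Function.comp_id] at h2
  refine h2.trans ?_
  rw [ENNReal.ofReal_mul hB]
  exact mul_le_mul' le_rfl h3

lemma ev_indicator {g : ℝ → ℝ} {a b B : ℝ} (hab : a ≤ b) (ha : 0 ≤ g a) (hb : 0 ≤ g b)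
    (hB : 0 ≤ B) (H : eVariationOn g (Icc a b) ≤ ENNReal.ofReal B) :
    eVariationOn (indicator (Icc a b) g) univ ≤ ENNReal.ofReal (g a + B + g b) := by
  have e1 : (univ : Set ℝ) = Iic a ∪ Ici a := by simp
  have e2 : Ici a = Icc a b ∪ Ici b := by rw [Icc_union_Ici_eq_Ici hab]
  rw [e1, eVariationOn.union _ isGreatest_Iic isLeast_Ici, e2,
    eVariationOn.union _ (isGreatest_Icc hab) isLeast_Ici]
  have i1 : eVariationOn (indicator (Icc a b) g) (Iic a) ≤ ENNReal.ofReal (g a) := by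
    have hm : MonotoneOn (indicator (Icc a b) g) (Iic a) := by
      intro x hx y hy hxy
      by_cases h : x = a
      · have : y = a := le_antisymm hy (h ▸ hxy)
        rw [h, this]
      · have h1 : x ∉ Icc a b := fun h2 => h (le_antisymm hx h2.1)
        rw [indicator_of_notMem h1]
        by_cases h2 : y ∈ Icc a b
        · have : y = a := le_antisymm hy h2.1
          rw [indicator_of_mem h2, this]; exact ha
        · rw [indicator_of_notMem h2]
    apply ev_le_of
    intro x hx y hy hxy
    refine (hm.eVariationOn_eq hx hy).le.trans (ENNReal.ofReal_le_ofReal ?_)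
    have h3 : indicator (Icc a b) g y ≤ indicator (Icc a b) g a := hm hy (mem_Iic.2 le_rfl) hy
    rw [indicator_of_mem (left_mem_Icc.2 hab)] at h3
    have h4 : 0 ≤ indicator (Icc a b) g x := by
      by_cases h2 : x ∈ Icc a b
      · have : x = a := le_antisymm hx h2.1
        rw [indicator_of_mem h2, this]; exact ha
      · rw [indicator_of_notMem h2]
    linarith
  have i3 : eVariationOn (indicator (Icc a b) g) (Ici b) ≤ ENNReal.ofReal (g b) := by
    have hm : AntitoneOn (indicator (Icc a b) g) (Ici b) := by
      intro x hx y hy hxy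
      by_cases h : y = b
      · have : x = b := le_antisymm (h ▸ hxy) hx
        rw [h, this]
      · have h1 : y ∉ Icc a b := fun h2 => h (le_antisymm h2.2 hy)
        rw [indicator_of_notMem h1]
        by_cases h2 : x ∈ Icc a b
        · have : x = b := le_antisymm h2.2 hx
          rw [indicator_of_mem h2, this]; exact hb
        · rw [indicator_of_notMem h2]
    apply ev_le_of
    intro x hx y hy hxy
    rw [← ev_neg]
    refine (hm.neg.eVariationOn_eq hx hy).le.trans (ENNReal.ofReal_le_ofReal ?_)
    have h3 : indicator (Icc a b) g x ≤ indicator (Icc a b) g b := hm (mem_Ici.2 le_rfl) hx hx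
    rw [indicator_of_mem (right_mem_Icc.2 hab)] at h3
    have h4 : 0 ≤ indicator (Icc a b) g y := by
      by_cases h2 : y ∈ Icc a b
      · have : y = b := le_antisymm h2.2 hy
        rw [indicator_of_mem h2, this]; exact hb
      · rw [indicator_of_notMem h2]
    linarith
  have i2 : eVariationOn (indicator (Icc a b) g) (Icc a b) ≤ ENNReal.ofReal B := by
    rw [eVariationOn.congr (f := indicator (Icc a b) g) (g := g)]
    · exact H
    · intro x hx
      exact indicator_of_mem hx g
  rw [ENNReal.ofReal_add (by positivity) hb, ENNReal.ofReal_add ha hB, add_assoc]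
  gcongr

lemma ev_sum {g : ℝ → ℝ} {z : ℕ → ℝ} {B : ℝ} (hB : 0 ≤ B) {i : ℕ}
    (hz : ∀ n, i ≤ n → z (n + 1) ≤ z n)
    (H : ∀ n, i ≤ n → eVariationOn g (Icc (z (n + 1)) (z n)) ≤ ENNReal.ofReal B) :
    ∀ j, i ≤ j → z j ≤ z i ∧ eVariationOn g (Icc (z j) (z i)) ≤ ENNReal.ofReal (B * j) := by
  intro j hij
  induction j, hij using Nat.le_induction with
  | base => simp
  | succ n hn ih =>
    refine ⟨(hz n hn).trans ih.1, ?_⟩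
    have := eVariationOn.Icc_add_Icc g (s := univ) (hz n hn) ih.1 (mem_univ _)
    simp only [univ_inter] at this
    rw [← this]
    push_cast
    rw [mul_add, add_comm, mul_one, ENNReal.ofReal_add (by positivity) hB]
    exact add_le_add ih.2 (H n hn)

lemma var_final {h : ℝ → ℝ} {z : ℕ → ℝ} {c0 C0 L0 : ℝ} (hc : 0 < c0) (hC : 0 < C0) (hL : 0 < L0)
    (hz : ∀ n, 1 ≤ n → z (n + 1) < z n)
    (H1 : ∀ n : ℕ, 1 ≤ n → ∀ x ∈ Icc (z (n + 1)) (z n), c0 * n ≤ h x ∧ h x ≤ C0 * n)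
    (H2 : ∀ n : ℕ, 1 ≤ n → ∀ x ∈ Icc (z (n + 1)) (z n), ∀ y ∈ Icc (z (n + 1)) (z n),
      |h x - h y| ≤ L0 / (z n - z (n + 1)) * |x - y|) :
    ∃ C : ℝ, 0 < C ∧ ∀ i j : ℕ, 1 ≤ i → i < j →
      eVariationOn (Set.indicator (Set.Icc (z j) (z i)) h) Set.univ
          ≤ ENNReal.ofReal (C * j) ∧
      eVariationOn (Set.indicator (Set.Icc (z j) (z i)) (fun x => (h x)⁻¹)) Set.univ
          ≤ ENNReal.ofReal (C * j / (i : ℝ) ^ 2) := by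
  refine ⟨(2 * C0 + L0) + (2 / c0 + L0 / c0 ^ 2), by positivity, ?_⟩
  intro i j hi hij
  have hiR : (1 : ℝ) ≤ i := by exact_mod_cast hi
  have hijR : (i : ℝ) ≤ j := by exact_mod_cast hij.le
  have hi0 : (0 : ℝ) < i := by linarith
  have hj0 : (0 : ℝ) < j := by linarith
  have mz : ∀ n, 1 ≤ n → z n ∈ Icc (z (n + 1)) (z n) := fun n hn => ⟨(hz n hn).le, le_rfl⟩
  have bi := H1 i hi _ (mz i hi)
  have bj := H1 j (by omega) _ (mz j (by omega))
  have pi : 0 < c0 * i := by positivity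
  have pj : 0 < c0 * j := by positivity
  constructor
  · have hs := ev_sum (g := h) (z := z) hL.le (i := i) (fun n hn => (hz n (by omega)).le) (by
      intro n hn
      have hzn := hz n (by omega)
      have := ev_lip (by have := sub_pos.2 hzn; positivity) (H2 n (by omega))
      rwa [div_mul_cancel₀ _ (sub_pos.2 hzn).ne'] at this) j hij.le
    refine (ev_indicator hs.1 (by linarith) (by linarith) (by positivity) hs.2).trans ?_
    apply ENNReal.ofReal_le_ofReal
    have q1 : C0 * i ≤ C0 * j := by gcongr
    have q2 : 0 ≤ (2 / c0 + L0 / c0 ^ 2) * j := by positivity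
    nlinarith
  · have hs := ev_sum (g := fun x => (h x)⁻¹) (z := z) (B := L0 / (c0 * i) ^ 2) (by positivity)
      (i := i) (fun n hn => (hz n (by omega)).le) (by
      intro n hn
      have hzn := hz n (by omega)
      have hzp := sub_pos.2 hzn
      have hnR : (i : ℝ) ≤ n := by exact_mod_cast hn
      have := ev_lip (g := fun x => (h x)⁻¹) (B := L0 / (c0 * i) ^ 2 / (z n - z (n + 1)))
        (by positivity) (by
          intro x hx y hy
          have b1 := (H1 n (by omega) x hx).1
          have b2 := (H1 n (by omega) y hy).1
          have b3 : c0 * i ≤ c0 * n := by gcongr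
          have px : 0 < h x := by linarith
          have py : 0 < h y := by linarith
          have e : (h x)⁻¹ - (h y)⁻¹ = (h y - h x) / (h x * h y) := by field_simp
          rw [e, abs_div, abs_of_pos (mul_pos px py), abs_sub_comm]
          calc _ ≤ (L0 / (z n - z (n + 1)) * |x - y|) / ((c0 * i) * (c0 * i)) := by
                gcongr
                · exact H2 n (by omega) x hx y hy
                · linarith
                · linarith
            _ = _ := by field_simp)
      rwa [div_mul_cancel₀ _ (sub_pos.2 hzn).ne'] at this) j hij.le
    have k1 : (h (z i))⁻¹ ≤ (c0 * i)⁻¹ := inv_anti₀ pi bi.1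
    have k2 : (h (z j))⁻¹ ≤ (c0 * j)⁻¹ := inv_anti₀ pj bj.1
    have k3 : (c0 * j)⁻¹ ≤ (c0 * i)⁻¹ := inv_anti₀ pi (by gcongr)
    refine (ev_indicator (g := fun x => (h x)⁻¹) hs.1 (inv_nonneg.2 (by linarith))
      (inv_nonneg.2 (by linarith)) (by positivity) hs.2).trans ?_
    apply ENNReal.ofReal_le_ofReal
    have k4 : (c0 * i)⁻¹ ≤ 1 / c0 * j / (i : ℝ) ^ 2 := by
      rw [le_div_iff₀ (by positivity)]
      calc (c0 * i)⁻¹ * (i : ℝ) ^ 2 = 1 / c0 * i := by field_simp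
        _ ≤ _ := by gcongr
    have k5 : 0 ≤ (2 * C0 + L0) * j / (i : ℝ) ^ 2 := by positivity
    have k6 : ((2 * C0 + L0) + (2 / c0 + L0 / c0 ^ 2)) * j / (i : ℝ) ^ 2 =
      (2 * C0 + L0) * j / (i : ℝ) ^ 2 + 2 * (1 / c0 * j / (i : ℝ) ^ 2) +
        L0 / (c0 * i) ^ 2 * j := by field_simp; ring
    rw [k6]
    linarith
lemma near_zero {δ c K m M Λ : ℝ} {w w1 w2 h : ℝ → ℝ} {a : ℕ → ℝ} (I : DInv δ m M Λ w h)
    (L : Loc δ c K w w1 w2) (A : Orb w δ a) (n0 : ℕ) (hn0 : 1 ≤ n0) :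
    ∃ c0 C0 L0 : ℝ, 0 < c0 ∧ 0 < C0 ∧ 0 < L0 ∧ ∀ k : ℕ, ∀ x ∈ Icc (a (k + 1)) (a k),
      (c0 * ((n0 + k : ℕ) : ℝ) ≤ h x ∧ h x ≤ C0 * ((n0 + k : ℕ) : ℝ)) ∧
      ∀ y ∈ Icc (a (k + 1)) (a k), |h x - h y| ≤ L0 / (a k - a (k + 1)) * |x - y| := by
  have hc := L.cpos
  have hK := L.Kpos
  have hm := I.mpos
  have hΛ := I.Lpos
  have hM : 0 < M := hm.trans_le ((I.lo 1 (by constructor <;> norm_num)).trans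
    (I.hi 1 (by constructor <;> norm_num)))
  have hn0R : (1 : ℝ) ≤ n0 := by exact_mod_cast hn0
  set D := Real.exp (16 * K / c) with hD
  have hDp : 0 < D := Real.exp_pos _
  set κ := min (1 / (n0 : ℝ)) (c / 16) with hκ
  have hκp : 0 < κ := lt_min (by positivity) (by positivity)
  have hw0 := L.wpos _ (A.pos 0) (A.le 0)
  have ha0 := A.pos 0
  set T := a 0 / w (a 0) with hT
  have hT1 : 1 ≤ T := by rw [hT, one_le_div hw0]; exact L.wle _ (A.pos 0) (A.le 0)
  set C1 := 16 * K / c * D + Λ / m with hC1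
  have hC1p : 0 < C1 := by positivity
  have hlow : ∀ k : ℕ, κ * ((n0 + k : ℕ) : ℝ) ≤ a k / w (a k) := by
    intro k
    refine le_trans ?_ (L.inv_u A k).1
    push_cast
    rw [mul_add]
    have e1 : κ * n0 ≤ 1 := by
      calc κ * n0 ≤ 1 / (n0 : ℝ) * n0 := by gcongr; exact min_le_left _ _
        _ = 1 := by field_simp
    have e2 : κ * k ≤ c / 16 * k := by gcongr; exact min_le_right _ _
    linarith
  have hup : ∀ k : ℕ, a (k + 1) / w (a (k + 1)) ≤ (T + 16) * ((n0 + k : ℕ) : ℝ) := by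
    intro k
    refine (L.inv_u A (k + 1)).2.trans ?_
    push_cast
    have hk : (0 : ℝ) ≤ k := by positivity
    nlinarith
  set C0 := M * D * (T + 16) with hC0
  have hC0p : 0 < C0 := by positivity
  have hbd : ∀ k : ℕ, ∀ x ∈ Icc (a (k + 1)) (a k),
      m / 2 / D * κ * ((n0 + k : ℕ) : ℝ) ≤ h x ∧ h x ≤ C0 * ((n0 + k : ℕ) : ℝ) := by
    intro k x hx
    have hst := A.step k
    have hwk := L.wpos _ (A.pos (k + 1)) (A.le _)
    obtain ⟨b1, b2⟩ := I.main_bd L (A.pos (k + 1)) (β := a k) (by linarith) (A.le k)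
      (by linarith) x hx
    constructor
    · refine le_trans ?_ b1
      rw [mul_assoc]
      gcongr
      exact hlow k
    · refine b2.trans ?_
      rw [hC0, mul_assoc (M * D)]
      gcongr
      exact hup k
  have hlip : ∀ k : ℕ, ∀ x ∈ Icc (a (k + 1)) (a k), ∀ y ∈ Icc (a (k + 1)) (a k), x < y →
      |h x - h y| ≤ C1 * Real.exp C1 * C0 / κ / (a k - a (k + 1)) * |x - y| := by
    intro k x hx y hy hxy
    have hst := A.step k
    have hα := A.pos (k + 1)
    have hwk := L.wpos _ (A.pos (k + 1)) (A.le _)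
    have hx0 : 0 < x := hα.trans_le hx.1
    have hxδ : x ≤ δ := hx.2.trans (A.le k)
    have hmo := L.mono hα hx.1 hxδ
    have hyx : y ≤ x + w x := by linarith [hx.1, hy.2]
    have Hc := I.main_comp L hx0 hxy (hy.2.trans (A.le k)) hyx
    have e1 := Hc x ⟨le_rfl, hxy.le⟩ y ⟨hxy.le, le_rfl⟩
    have e2 := Hc y ⟨hxy.le, le_rfl⟩ x ⟨le_rfl, hxy.le⟩
    rw [← hD, ← hC1] at e1 e2
    set t := (y - x) / x with ht
    have hyx0 : 0 < y - x := by linarith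
    have ht0 : 0 ≤ t := by positivity
    have ht1 : t ≤ 1 := by
      rw [ht, div_le_one hx0]; linarith [L.wle x hx0 hxδ]
    obtain ⟨-, bx⟩ := hbd k x hx
    obtain ⟨-, bny⟩ := hbd k y hy
    set n : ℝ := ((n0 + k : ℕ) : ℝ) with hn
    have hnp : 0 ≤ n := by positivity
    have e3 : Real.exp (C1 * t) - 1 ≤ C1 * t * Real.exp C1 := by
      have f1 := Real.add_one_le_exp (-(C1 * t))
      have f2 : Real.exp (-(C1 * t)) * Real.exp (C1 * t) = 1 := by rw [← Real.exp_add]; simp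
      have f3 : Real.exp (C1 * t) ≤ Real.exp C1 := by
        apply Real.exp_le_exp.2; nlinarith
      have f4 := Real.exp_pos (C1 * t)
      have f5 : 0 ≤ C1 * t := by positivity
      nlinarith
    have e4 : 0 ≤ Real.exp (C1 * t) - 1 := by
      have := Real.add_one_le_exp (C1 * t)
      have f5 : 0 ≤ C1 * t := by positivity
      linarith
    have e5 : |h x - h y| ≤ (C1 * t * Real.exp C1) * (C0 * n) := by
      have g1 : (Real.exp (C1 * t) - 1) * h y ≤ (C1 * t * Real.exp C1) * (C0 * n) :=
        (mul_le_mul_of_nonneg_left bny e4).trans (by gcongr)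
      have g2 : (Real.exp (C1 * t) - 1) * h x ≤ (C1 * t * Real.exp C1) * (C0 * n) :=
        (mul_le_mul_of_nonneg_left bx e4).trans (by gcongr)
      rw [abs_le]; constructor <;> linarith
    refine e5.trans ?_
    have hwa : a k - a (k + 1) = w (a (k + 1)) := by linarith
    rw [hwa, abs_sub_comm, abs_of_pos hyx0]
    have e6 : t ≤ (y - x) / a (k + 1) := by rw [ht]; gcongr; exact hx.1
    have e7 : n ≤ a (k + 1) / w (a (k + 1)) / κ := by
      rw [le_div_iff₀ hκp, mul_comm]
      refine le_trans ?_ (hlow (k + 1))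
      rw [hn]; gcongr; omega
    calc _ ≤ (C1 * ((y - x) / a (k + 1)) * Real.exp C1) *
          (C0 * (a (k + 1) / w (a (k + 1)) / κ)) := by gcongr
      _ = _ := by field_simp
  refine ⟨m / 2 / D * κ, C0, C1 * Real.exp C1 * C0 / κ, by positivity, hC0p, by positivity, ?_⟩
  intro k x hx
  refine ⟨hbd k x hx, fun y hy => ?_⟩
  rcases lt_trichotomy x y with hxy | hxy | hxy
  · exact hlip k x hx y hy hxy
  · simp [hxy]
  · rw [abs_sub_comm, abs_sub_comm x y]
    exact hlip k y hy x hx hxy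


noncomputable def HW (γ : ℝ) (ρ : ℝ → ℝ) (x : ℝ) : ℝ := x * (x ^ γ * ρ x)

noncomputable def HW1 (γ : ℝ) (ρ : ℝ → ℝ) (x : ℝ) : ℝ :=
  (1 + γ) * (x ^ γ * ρ x) + x * (x ^ γ * deriv ρ x)

noncomputable def HW2 (γ : ℝ) (ρ : ℝ → ℝ) (x : ℝ) : ℝ :=
  (1 + γ) * γ * (x ^ (γ - 1) * ρ x) + 2 * (1 + γ) * (x ^ γ * deriv ρ x)
    + x * (x ^ γ * deriv (deriv ρ) x)

lemma HW_d1 {γ : ℝ} {ρ : ℝ → ℝ} (hs : ContDiffOn ℝ 2 ρ (Set.Ioo 0 1)) {x : ℝ}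
    (hx : 0 < x) (hx1 : x < 1) : HasDerivAt (HW γ ρ) (HW1 γ ρ x) x := by
  have hd : HasDerivAt ρ (deriv ρ x) x :=
    ((hs.differentiableOn (by norm_num)).differentiableAt
      (isOpen_Ioo.mem_nhds ⟨hx, hx1⟩)).hasDerivAt
  have hp := Real.hasDerivAt_rpow_const (x := x) (p := γ) (Or.inl hx.ne')
  have : HasDerivAt (HW γ ρ) _ x := (hasDerivAt_id x).mul (hp.mul hd)
  refine this.congr_deriv ?_
  have e : x ^ γ = x * x ^ (γ - 1) := by
    rw [Real.rpow_sub_one hx.ne']; field_simp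
  simp only [HW1, id, Pi.mul_apply]
  rw [e]; ring

lemma HW_d2 {γ : ℝ} {ρ : ℝ → ℝ} (hs : ContDiffOn ℝ 2 ρ (Set.Ioo 0 1)) {x : ℝ}
    (hx : 0 < x) (hx1 : x < 1) : HasDerivAt (HW1 γ ρ) (HW2 γ ρ x) x := by
  have hd : HasDerivAt ρ (deriv ρ x) x :=
    ((hs.differentiableOn (by norm_num)).differentiableAt
      (isOpen_Ioo.mem_nhds ⟨hx, hx1⟩)).hasDerivAt
  have hs1 : ContDiffOn ℝ 1 (deriv ρ) (Set.Ioo 0 1) :=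
    hs.deriv_of_isOpen isOpen_Ioo (by norm_num)
  have hd2 : HasDerivAt (deriv ρ) (deriv (deriv ρ) x) x :=
    ((hs1.differentiableOn (by norm_num)).differentiableAt
      (isOpen_Ioo.mem_nhds ⟨hx, hx1⟩)).hasDerivAt
  have hp := Real.hasDerivAt_rpow_const (x := x) (p := γ) (Or.inl hx.ne')
  have : HasDerivAt (HW1 γ ρ) _ x := ((hp.mul hd).const_mul (1 + γ)).add ((hasDerivAt_id x).mul (hp.mul hd2))
  refine this.congr_deriv ?_
  have e : x ^ γ = x * x ^ (γ - 1) := by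
    rw [Real.rpow_sub_one hx.ne']; field_simp
  simp only [HW2, id, Pi.mul_apply]
  rw [e]; ring

lemma hol_loc {γ : ℝ} {ρ f : ℝ → ℝ} (hγ1 : γ < 1) (hf : IsHolland γ ρ f) :
    ∃ δ : ℝ, δ ≤ 1/4 ∧ Loc δ (γ/2) 7 (HW γ ρ) (HW1 γ ρ) (HW2 γ ρ) := by
  have hγ := hf.gamma_pos
  have E1 := hf.deriv_small.eventually (Metric.ball_mem_nhds 0 (show 0 < γ/4 by linarith))
  have E2 := hf.deriv2_small.eventually (Metric.ball_mem_nhds 0 one_pos)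
  have E3 := hf.rho_zero.eventually (Metric.ball_mem_nhds 0 one_pos)
  have E4 : ∀ᶠ x in 𝓝[>] (0:ℝ), x < 1/4 :=
    (eventually_lt_nhds (by norm_num : (0:ℝ) < 1/4)).filter_mono nhdsWithin_le_nhds
  have E := E1.and (E2.and (E3.and E4))
  obtain ⟨δ, hδ, hE⟩ := (mem_nhdsGT_iff_exists_Ioc_subset).1 E
  have hδ0 : 0 < δ := hδ
  have hδ4 : δ < 1/4 := (hE ⟨hδ0, le_rfl⟩).2.2.2
  have hb : ∀ x, 0 < x → x ≤ δ → 0 < ρ x ∧ ρ x < 1 ∧ |x * deriv ρ x / ρ x| < γ/4 ∧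
      |x^2 * deriv (deriv ρ) x / ρ x| < 1 ∧ x < 1 := by
    intro x h0 h1
    have := hE ⟨h0, h1⟩
    simp only [mem_ofPred_eq, dist_zero_right, Real.norm_eq_abs] at this
    exact ⟨hf.rho_pos x ⟨h0, by linarith⟩, (abs_lt.1 this.2.2.1).2, this.1, this.2.1, by linarith⟩
  have hwp : ∀ x, 0 < x → x ≤ δ → 0 < HW γ ρ x := by
    intro x h0 h1
    have := (hb x h0 h1).1
    unfold HW; positivity
  have k1 : ∀ x, 0 < x → x ≤ δ → x * HW1 γ ρ x = HW γ ρ x * ((1+γ) + x * deriv ρ x / ρ x) := by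
    intro x h0 h1
    have := (hb x h0 h1).1
    unfold HW HW1; field_simp
  have k2 : ∀ x, 0 < x → x ≤ δ → HW2 γ ρ x * x^2 = HW γ ρ x *
      ((1+γ)*γ + 2*(1+γ)*(x * deriv ρ x / ρ x) + x^2 * deriv (deriv ρ) x / ρ x) := by
    intro x h0 h1
    have := (hb x h0 h1).1
    have e : x ^ γ = x * x ^ (γ - 1) := by
      rw [Real.rpow_sub_one h0.ne']; field_simp
    unfold HW HW2; rw [e]; field_simp
  refine ⟨δ, hδ4.le, ⟨hδ0, by linarith, by norm_num, ?_, ?_, hwp, ?_, ?_, ?_, ?_⟩⟩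
  · intro x h0 h1; exact HW_d1 hf.smooth h0 (hb x h0 h1).2.2.2.2
  · intro x h0 h1; exact HW_d2 hf.smooth h0 (hb x h0 h1).2.2.2.2
  · intro x h0 h1
    obtain ⟨b1, b2, b3, b4, b5⟩ := hb x h0 h1
    have : x ^ γ ≤ 1 := Real.rpow_le_one h0.le b5.le hγ.le
    have : x ^ γ * ρ x ≤ 1 * 1 := mul_le_mul this b2.le b1.le zero_le_one
    unfold HW; nlinarith
  · intro x h0 h1
    obtain ⟨b1, b2, b3, b4, b5⟩ := hb x h0 h1
    rw [k1 x h0 h1, mul_comm (HW γ ρ x)]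
    refine mul_le_mul_of_nonneg_right ?_ (hwp x h0 h1).le
    linarith [(abs_lt.1 b3).1]
  · intro x h0 h1
    obtain ⟨b1, b2, b3, b4, b5⟩ := hb x h0 h1
    rw [k1 x h0 h1, mul_comm (HW γ ρ x)]
    refine mul_le_mul_of_nonneg_right ?_ (hwp x h0 h1).le
    linarith [(abs_lt.1 b3).2]
  · intro x h0 h1
    obtain ⟨b1, b2, b3, b4, b5⟩ := hb x h0 h1
    have e : |HW2 γ ρ x| * x^2 = |HW2 γ ρ x * x^2| := by
      rw [abs_mul, abs_of_nonneg (sq_nonneg x)]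
    rw [e, k2 x h0 h1, abs_mul, abs_of_pos (hwp x h0 h1), mul_comm]
    refine mul_le_mul_of_nonneg_right ?_ (hwp x h0 h1).le
    rw [abs_lt] at b3 b4
    set u := x * deriv ρ x / ρ x
    rw [abs_le]
    constructor <;> nlinarith

lemma hol_eq {γ : ℝ} {ρ f : ℝ → ℝ} (hf : IsHolland γ ρ f) {x : ℝ} (h0 : 0 < x) (h1 : x ≤ 1/2) :
    f x = x + HW γ ρ x := by
  rw [hf.eq_left x ⟨h0.le, h1⟩]; unfold HW; ring

lemma HW_pos {γ : ℝ} {ρ f : ℝ → ℝ} (hf : IsHolland γ ρ f) {x : ℝ} (h0 : 0 < x) (h1 : x < 1) :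
    0 < HW γ ρ x := by
  have := hf.rho_pos x ⟨h0, h1⟩
  unfold HW; positivity

lemma hol_cont {γ : ℝ} {ρ f : ℝ → ℝ} (hf : IsHolland γ ρ f) :
    ContinuousOn f (Ioc 0 (1/2)) := by
  have : ContinuousOn (fun x => x + HW γ ρ x) (Ioc 0 (1/2)) := by
    intro x hx
    exact (continuousAt_id.add (HW_d1 (γ := γ) hf.smooth hx.1
      (by linarith [hx.2])).continuousAt).continuousWithinAt
  exact this.congr fun x hx => hol_eq hf hx.1 hx.2

lemma hol_strict {γ : ℝ} {ρ f : ℝ → ℝ} (hf : IsHolland γ ρ f) :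
    StrictMonoOn f (Ioc 0 (1/2)) := by
  refine strictMonoOn_of_deriv_pos (convex_Ioc _ _) (hol_cont hf) ?_
  intro x hx
  rw [interior_Ioc] at hx
  have := hf.expanding x ⟨hx.1, by linarith [hx.2]⟩ hx.2.ne
  linarith

lemma hol_orb_zero {γ : ℝ} {ρ f : ℝ → ℝ} (hf : IsHolland γ ρ f) {a : ℕ → ℝ}
    (h0 : ∀ n, 0 < a n) (h1 : ∀ n, a n ≤ 1/2) (hs : ∀ n, f (a (n+1)) = a n) :
    Tendsto a atTop (𝓝 0) := by
  have hanti : Antitone a := by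
    refine antitone_nat_of_succ_le fun n => ?_
    have := hol_eq hf (h0 (n+1)) (h1 (n+1))
    have := HW_pos hf (h0 (n+1)) (by linarith [h1 (n+1)])
    linarith [hs n]
  have hbd : BddBelow (range a) := ⟨0, by rintro _ ⟨n, rfl⟩; exact (h0 n).le⟩
  have ht := tendsto_atTop_ciInf hanti hbd
  set l := ⨅ n, a n
  have hl0 : 0 ≤ l := le_ciInf fun n => (h0 n).le
  rcases hl0.eq_or_lt with h | h
  · rwa [← h] at ht
  · exfalso
    have hl1 : l ≤ 1/2 := (ciInf_le hbd 0).trans (h1 0)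
    have ht1 : Tendsto (fun n => a (n+1)) atTop (𝓝 l) := ht.comp (tendsto_add_atTop_nat 1)
    have hc : Tendsto (fun n => f (a (n+1))) atTop (𝓝 (f l)) := by
      refine (hol_cont hf l ⟨h, hl1⟩).tendsto.comp ?_
      exact tendsto_nhdsWithin_iff.2 ⟨ht1, Eventually.of_forall fun n => ⟨h0 _, h1 _⟩⟩
    have he : f l = l := by
      refine tendsto_nhds_unique hc ?_
      simpa only [hs] using ht
    have := hol_eq hf h hl1
    have := HW_pos hf h (by linarith)
    linarith

lemma nu_Icc {ν : Measure ℝ} {h : ℝ → ℝ}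
    (hdens : ν = (volume.restrict (Icc (0:ℝ) 1)).withDensity (fun x => ENNReal.ofReal (h x)))
    (hpos : ∀ x ∈ Ioc (0:ℝ) 1, 0 < h x) (hc : ContinuousOn h (Ioc 0 1)) {u v : ℝ}
    (hu : 0 < u) (huv : u ≤ v) (hv : v ≤ 1) :
    ν (Icc u v) = ENNReal.ofReal (∫ x in u..v, h x) := by
  have hsub : Icc u v ⊆ Ioc 0 1 := fun x hx => ⟨hu.trans_le hx.1, hx.2.trans hv⟩
  rw [hdens, withDensity_apply _ measurableSet_Icc, Measure.restrict_restrict measurableSet_Icc,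
    inter_eq_left.2 (hsub.trans Ioc_subset_Icc_self), intervalIntegral.integral_of_le huv,
    ← integral_Icc_eq_integral_Ioc, ofReal_integral_eq_lintegral_ofReal]
  · exact (hc.mono hsub).integrableOn_Icc
  · exact (ae_restrict_mem measurableSet_Icc).mono fun x hx => (hpos x (hsub hx)).le

lemma hol_int {ν : Measure ℝ} [IsProbabilityMeasure ν] {h : ℝ → ℝ}
    (hdens : ν = (volume.restrict (Icc (0:ℝ) 1)).withDensity (fun x => ENNReal.ofReal (h x)))
    (hpos : ∀ x ∈ Ioc (0:ℝ) 1, 0 < h x) (hc : ContinuousOn h (Ioc 0 1)) :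
    IntegrableOn h (Ioc 0 1) := by
  refine ⟨hc.aestronglyMeasurable measurableSet_Ioc, ?_⟩
  rw [hasFiniteIntegral_iff_ofReal
    ((ae_restrict_mem measurableSet_Ioc).mono fun x hx => (hpos x hx).le)]
  have e : ∫⁻ x in Icc (0:ℝ) 1, ENNReal.ofReal (h x) = 1 := by
    have : ν univ = 1 := measure_univ
    rw [hdens, withDensity_apply _ MeasurableSet.univ] at this
    simpa using this
  calc _ ≤ ∫⁻ x in Icc (0:ℝ) 1, ENNReal.ofReal (h x) :=
        lintegral_mono_set Ioc_subset_Icc_self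
    _ < ⊤ := by rw [e]; exact ENNReal.one_lt_top

lemma hol_tail {h : ℝ → ℝ} (hi : IntegrableOn h (Ioc 0 1)) {a b : ℕ → ℝ}
    (a0 : ∀ n, 0 < a n) (a1 : ∀ n, a n ≤ 1) (b0 : ∀ n, 0 < b n) (b1 : ∀ n, b n ≤ 1)
    (ha : Tendsto a atTop (𝓝 0)) (hb : Tendsto b atTop (𝓝 0)) :
    Tendsto (fun n => ∫ x in (a n)..(b n), h x) atTop (𝓝 0) := by
  have hi2 : IntervalIntegrable h volume 0 1 :=
    (intervalIntegrable_iff_integrableOn_Ioc_of_le zero_le_one).2 hi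
  have hI : ∀ y, 0 < y → y ≤ 1 → IntervalIntegrable h volume 0 y := fun y h0 h1 =>
    (intervalIntegrable_iff_integrableOn_Ioc_of_le h0.le).2
      (hi.mono_set (Ioc_subset_Ioc_right h1))
  have hcon : ContinuousOn (fun y => ∫ x in (0:ℝ)..y, h x) (Icc 0 1) := by
    have := intervalIntegral.continuousOn_primitive_interval (a := (0:ℝ)) (b := 1) (μ := volume)
      (f := h) (by rw [uIcc_of_le zero_le_one, integrableOn_Icc_iff_integrableOn_Ioc]; exact hi)
    rwa [uIcc_of_le zero_le_one] at this
  have key : ∀ c : ℕ → ℝ, (∀ n, 0 < c n) → (∀ n, c n ≤ 1) → Tendsto c atTop (𝓝 0) →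
      Tendsto (fun n => ∫ x in (0:ℝ)..(c n), h x) atTop (𝓝 0) := by
    intro c c0 c1 hc
    have := (hcon 0 ⟨le_rfl, zero_le_one⟩).tendsto.comp
      (tendsto_nhdsWithin_iff.2 ⟨hc, Eventually.of_forall fun n => ⟨(c0 n).le, c1 n⟩⟩)
    simpa [Function.comp_def] using this
  have := (key b b0 b1 hb).sub (key a a0 a1 ha)
  rw [sub_zero] at this
  refine this.congr fun n => ?_
  exact intervalIntegral.integral_interval_sub_left (hI _ (b0 n) (b1 n)) (hI _ (a0 n) (a1 n))

lemma hol_inv {γ : ℝ} {ρ f : ℝ → ℝ} (hf : IsHolland γ ρ f) {ν : Measure ℝ} {h : ℝ → ℝ}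
    (hν : MeasurePreserving f ν ν)
    (hdens : ν = (volume.restrict (Icc (0:ℝ) 1)).withDensity (fun x => ENNReal.ofReal (h x)))
    (hpos : ∀ x ∈ Ioc (0:ℝ) 1, 0 < h x) (hc : ContinuousOn h (Ioc 0 1)) {s t : ℝ}
    (hs : 0 < s) (hst : s < t) (ht : t < 1/2) (hft : f t < 1) :
    ∫ x in (f s)..(f t), h x =
      (∫ x in s..t, h x) + ∫ x in ((1 + f s)/2)..((1 + f t)/2), h x := by
  have hS := hol_strict hf
  have ms : s ∈ Ioc (0:ℝ) (1/2) := ⟨hs, by linarith⟩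
  have mt : t ∈ Ioc (0:ℝ) (1/2) := ⟨hs.trans hst, by linarith⟩
  have hfst := hS ms mt hst
  have hfs : 0 < f s := by
    rw [hol_eq hf ms.1 ms.2]; have := HW_pos hf ms.1 (by linarith); linarith
  have e1 : ν (Icc (f s) (f t)) = ν (f ⁻¹' Icc (f s) (f t)) :=
    (hν.measure_preimage measurableSet_Icc.nullMeasurableSet).symm
  have hz : ν (Icc (0:ℝ) 1)ᶜ = 0 := by
    rw [hdens]
    refine withDensity_absolutelyContinuous _ _ ?_
    rw [Measure.restrict_apply measurableSet_Icc.compl]; simp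
  have e2 : ν (f ⁻¹' Icc (f s) (f t)) =
      ν (Icc s t ∪ Icc ((1 + f s)/2) ((1 + f t)/2)) := by
    refine measure_congr ?_
    have hae : ∀ᵐ x ∂ν, x ∈ Icc (0:ℝ) 1 := hz
    filter_upwards [hae] with x hx
    refine propext ?_
    change x ∈ f ⁻¹' Icc (f s) (f t) ↔ x ∈ Icc s t ∪ Icc ((1 + f s)/2) ((1 + f t)/2)
    simp only [mem_preimage, mem_union, mem_Icc]
    rcases le_or_gt x (1/2) with h2 | h2
    · rcases hx.1.eq_or_lt with h3 | h3
      · subst h3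
        have : f 0 = 0 := by rw [hf.eq_left 0 ⟨le_rfl, by norm_num⟩]; simp
        rw [this]
        constructor
        · intro h; linarith [h.1]
        · rintro (h | h) <;> linarith [h.1]
      · have mx : x ∈ Ioc (0:ℝ) (1/2) := ⟨h3, h2⟩
        rw [hS.le_iff_le ms mx, hS.le_iff_le mx mt]
        constructor
        · exact Or.inl
        · rintro (h | h)
          · exact h
          · linarith [h.1]
    · rw [hf.eq_right x ⟨h2, hx.2⟩]
      constructor
      · intro h; right; constructor <;> linarith [h.1, h.2]
      · rintro (h | h)
        · linarith [h.2]
        · constructor <;> linarith [h.1, h.2]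
  have e3 : ν (Icc s t ∪ Icc ((1 + f s)/2) ((1 + f t)/2)) =
      ν (Icc s t) + ν (Icc ((1 + f s)/2) ((1 + f t)/2)) := by
    refine measure_union ?_ measurableSet_Icc
    rw [Set.disjoint_left]
    intro x h1 h2
    linarith [h1.2, h2.1]
  rw [e2, e3, nu_Icc hdens hpos hc hfs hfst.le hft.le,
    nu_Icc hdens hpos hc hs hst.le (by linarith),
    nu_Icc hdens hpos hc (by linarith) (by linarith) (by linarith)] at e1
  have nn : ∀ u v : ℝ, 0 < u → u ≤ v → v ≤ 1 → 0 ≤ ∫ x in u..v, h x := by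
    intro u v h1 h2 h3
    exact intervalIntegral.integral_nonneg h2 fun x hx =>
      (hpos x ⟨h1.trans_le hx.1, hx.2.trans h3⟩).le
  have n1 := nn s t hs hst.le (by linarith)
  have n2 := nn ((1 + f s)/2) ((1 + f t)/2) (by linarith) (by linarith) (by linarith)
  rw [← ENNReal.ofReal_add n1 n2] at e1
  exact (ENNReal.ofReal_eq_ofReal_iff (nn _ _ hfs hfst.le hft.le) (add_nonneg n1 n2)).1 e1

lemma lip_bds {h : ℝ → ℝ} (hpos : ∀ x ∈ Ioc (0:ℝ) 1, 0 < h x)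
    (hLip : ∀ ε : ℝ, 0 < ε → ∃ L : NNReal, LipschitzOnWith L h (Icc ε 1)) {e : ℝ}
    (he : 0 < e) (he1 : e ≤ 1) : ∃ m M Λ : ℝ, 0 < m ∧ 0 < M ∧ 0 < Λ ∧
      (∀ x ∈ Icc e 1, m ≤ h x ∧ h x ≤ M) ∧
      ∀ x ∈ Icc e 1, ∀ y ∈ Icc e 1, |h x - h y| ≤ Λ * |x - y| := by
  obtain ⟨L, hL⟩ := hLip e he
  have hne : (Icc e 1).Nonempty := ⟨e, le_rfl, he1⟩
  obtain ⟨p, hp, hmin⟩ := isCompact_Icc.exists_isMinOn hne hL.continuousOn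
  obtain ⟨q, hq, hmax⟩ := isCompact_Icc.exists_isMaxOn hne hL.continuousOn
  refine ⟨h p, h q, L + 1, hpos p ⟨he.trans_le hp.1, hp.2⟩, hpos q ⟨he.trans_le hq.1, hq.2⟩,
    by positivity, fun x hx => ⟨hmin hx, hmax hx⟩, ?_⟩
  intro x hx y hy
  have := hL.dist_le_mul x hx y hy
  rw [Real.dist_eq, Real.dist_eq] at this
  nlinarith [abs_nonneg (x - y)]

lemma hol_hcont {h : ℝ → ℝ}
    (hLip : ∀ ε : ℝ, 0 < ε → ∃ L : NNReal, LipschitzOnWith L h (Icc ε 1)) :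
    ContinuousOn h (Ioc 0 1) := by
  intro x hx
  obtain ⟨L, hL⟩ := hLip (x/2) (by linarith [hx.1])
  refine (hL.continuousOn x ⟨by linarith [hx.1], hx.2⟩).mono_of_mem_nhdsWithin ?_
  rw [mem_nhdsWithin]
  refine ⟨Ioi (x/2), isOpen_Ioi, by simp only [mem_Ioi]; linarith [hx.1], ?_⟩
  rintro y ⟨h1, h2⟩
  exact ⟨le_of_lt h1, h2.2⟩

theorem statement10
    (γ : ℝ) (ρ : ℝ → ℝ) (f : ℝ → ℝ) (hγ0 : 0 < γ) (hγ1 : γ < 1)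
    (hf : IsHolland γ ρ f)
    (ν : Measure ℝ) [IsProbabilityMeasure ν]
    (hν_inv : MeasurePreserving f ν ν)
    (h : ℝ → ℝ)
    (hdens : ν = (MeasureTheory.volume.restrict (Set.Icc (0:ℝ) 1)).withDensity
      (fun x => ENNReal.ofReal (h x)))
    (hpos : ∀ x ∈ Set.Ioc (0:ℝ) 1, 0 < h x)
    (hLip : ∀ ε : ℝ, 0 < ε → ∃ L : NNReal, LipschitzOnWith L h (Set.Icc ε 1))
    (v0 v1 : ℝ → ℝ)
    (hv0 : ∀ x ∈ Set.Ioo (0:ℝ) 1, v0 x ∈ Set.Ioo (0:ℝ) (1/2) ∧ f (v0 x) = x)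
    (hv1 : ∀ x ∈ Set.Ioo (0:ℝ) 1, v1 x ∈ Set.Ioo (1/2:ℝ) 1 ∧ f (v1 x) = x)
    (z : ℕ → ℝ) (hz0 : z 0 = 1) (hz1 : z 1 = 1/2)
    (hzrec : ∀ n : ℕ, 1 ≤ n → z (n + 1) = v0 (z n)) :
    ∃ C : ℝ, 0 < C ∧ ∀ i j : ℕ, 1 ≤ i → i < j →
      eVariationOn (Set.indicator (Set.Icc (z j) (z i)) h) Set.univ
          ≤ ENNReal.ofReal (C * j) ∧
      eVariationOn (Set.indicator (Set.Icc (z j) (z i)) (fun x => (h x)⁻¹)) Set.univ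
          ≤ ENNReal.ofReal (C * j / (i : ℝ) ^ 2) := by
  obtain ⟨δ, hδ4, L⟩ := hol_loc hγ1 hf
  have hδ := L.dpos
  have hcont := hol_hcont hLip
  have hint := hol_int hdens hpos hcont
  have hzero : ∀ a, Orb (HW γ ρ) δ a → Tendsto a atTop (𝓝 0) := by
    intro a A
    refine hol_orb_zero hf A.pos (fun n => (A.le n).trans (by linarith)) fun n => ?_
    rw [hol_eq hf (A.pos _) ((A.le _).trans (by linarith)), A.step]
  have hv : ∀ x, 0 < x → x < 1 → 0 < v0 x ∧ v0 x < 1/2 ∧ f (v0 x) = x ∧ v0 x < x ∧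
      v0 x + HW γ ρ (v0 x) = x := by
    intro x h0 h1
    obtain ⟨⟨a1, a2⟩, a3⟩ := hv0 x ⟨h0, h1⟩
    have e := hol_eq hf a1 a2.le
    have := HW_pos hf a1 (by linarith)
    exact ⟨a1, a2, a3, by linarith, by linarith⟩
  obtain ⟨m, M, Λ, hm, hM, hΛ, hb, hl⟩ := lip_bds hpos hLip (e := 1/2) (by norm_num) (by norm_num)
  have I : DInv δ m M Λ (HW γ ρ) h := by
    refine ⟨by linarith, hm, hΛ.le, hcont, fun x hx => (hb x hx).1, fun x hx => (hb x hx).2, hl,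
      fun x hx => (hpos x hx).le, ?_, ?_, hzero, ?_⟩
    · intro s t hs hst ht htw
      have es := hol_eq hf hs (by linarith : s ≤ 1/2)
      have et := hol_eq hf (hs.trans hst) (by linarith : t ≤ 1/2)
      have := hol_inv hf hν_inv hdens hpos hcont hs hst (by linarith) (by linarith)
      rwa [es, et] at this
    · intro x h0 h1
      have hx : ∀ n : ℕ, 0 < v0^[n] x ∧ v0^[n] x ≤ δ := by
        intro n
        induction n with
        | zero => exact ⟨h0, h1⟩
        | succ n ih =>
          rw [Function.iterate_succ_apply']
          have := hv _ ih.1 (by linarith [ih.2])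
          exact ⟨this.1, by linarith [ih.2, this.2.2.2.1]⟩
      refine ⟨fun n => v0^[n] x, ⟨fun n => (hx n).1, fun n => (hx n).2, fun n => ?_⟩, rfl⟩
      simp only [Function.iterate_succ_apply']
      exact (hv _ (hx n).1 (by linarith [(hx n).2])).2.2.2.2
    · intro a b A B
      exact hol_tail hint A.pos (fun n => (A.le n).trans (by linarith)) B.pos
        (fun n => (B.le n).trans (by linarith)) (hzero a A) (hzero b B)
  have zb : ∀ n : ℕ, 0 < z (n+1) ∧ z (n+1) ≤ 1/2 := by
    intro n
    induction n with
    | zero => rw [hz1]; norm_num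
    | succ n ih =>
      rw [hzrec (n+1) (by omega)]
      have := hv _ ih.1 (by linarith [ih.2])
      exact ⟨this.1, this.2.1.le⟩
  have zb1 : ∀ n : ℕ, 1 ≤ n → 0 < z n ∧ z n ≤ 1/2 := by
    intro n hn
    obtain ⟨k, rfl⟩ : ∃ k, n = k + 1 := ⟨n - 1, by omega⟩
    exact zb k
  have zs : ∀ n : ℕ, 1 ≤ n → z (n+1) + HW γ ρ (z (n+1)) = z n ∧ f (z (n+1)) = z n ∧
      z (n+1) < z n := by
    intro n hn
    rw [hzrec n hn]
    have := hv _ (zb1 n hn).1 (by linarith [(zb1 n hn).2])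
    exact ⟨this.2.2.2.2, this.2.2.1, this.2.2.2.1⟩
  have zanti : ∀ k : ℕ, ∀ n : ℕ, 1 ≤ n → z (n + k) ≤ z n := by
    intro k n hn
    induction k with
    | zero => exact le_rfl
    | succ k ih => exact (zs (n+k) (by omega)).2.2.le.trans ih
  have zt : Tendsto (fun n => z (n+1)) atTop (𝓝 0) :=
    hol_orb_zero hf (fun n => (zb n).1) (fun n => (zb n).2) fun n => (zs (n+1) (by omega)).2.1
  obtain ⟨N, hN⟩ := eventually_atTop.1 (zt.eventually (eventually_lt_nhds hδ))
  set n0 := N + 1 with hn0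
  have A : Orb (HW γ ρ) δ (fun k => z (n0 + k)) := by
    refine ⟨fun k => (zb1 _ (by omega)).1, fun k => ?_, fun k => (zs (n0+k) (by omega)).1⟩
    have := hN (N + k) (by omega)
    rw [show n0 + k = N + k + 1 by omega]
    exact le_of_lt this
  obtain ⟨c0, C0, L0, hc0, hC0, hL0, H⟩ := near_zero I L A n0 (by omega)
  have zn0 := zb1 n0 (by omega)
  obtain ⟨m', M', Λ', hm', hM', hΛ', hb', hl'⟩ :=
    lip_bds hpos hLip (e := z n0) zn0.1 (by linarith [zn0.2])
  have hn0R : (0:ℝ) < n0 := by positivity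
  have main : ∀ n : ℕ, 1 ≤ n → ∀ x ∈ Icc (z (n+1)) (z n),
      (min c0 (m'/n0) * n ≤ h x ∧ h x ≤ max C0 M' * n) ∧ ∀ y ∈ Icc (z (n+1)) (z n),
        |h x - h y| ≤ max L0 Λ' / (z n - z (n+1)) * |x - y| := by
    intro n hn x hx
    have hnR : (1:ℝ) ≤ n := by exact_mod_cast hn
    have hgap : 0 < z n - z (n+1) := by linarith [(zs n hn).2.2]
    rcases le_or_gt n0 n with hc | hc
    · obtain ⟨k, rfl⟩ := Nat.exists_eq_add_of_le hc
      obtain ⟨⟨H1, H2⟩, H3⟩ := H k x hx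
      refine ⟨⟨le_trans ?_ H1, H2.trans ?_⟩, fun y hy => (H3 y hy).trans ?_⟩
      · gcongr; exact min_le_left _ _
      · gcongr; exact le_max_left _ _
      · have : z (n0 + (k+1)) = z (n0 + k + 1) := rfl
        simp only [this]
        gcongr; exact le_max_left _ _
    · have hsub : ∀ y ∈ Icc (z (n+1)) (z n), y ∈ Icc (z n0) 1 := by
        intro y hy
        obtain ⟨k, hk⟩ := Nat.exists_eq_add_of_le (show n + 1 ≤ n0 from hc)
        have := zanti k (n+1) (by omega)
        rw [← hk] at this
        exact ⟨this.trans hy.1, by linarith [hy.2, (zb1 n hn).2]⟩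
      have hnn : (n:ℝ) ≤ n0 := by exact_mod_cast hc.le
      obtain ⟨b1, b2⟩ := hb' x (hsub x hx)
      refine ⟨⟨le_trans ?_ b1, b2.trans ?_⟩, fun y hy => (hl' x (hsub x hx) y (hsub y hy)).trans ?_⟩
      · calc min c0 (m'/n0) * n ≤ m'/n0 * n0 := by
              gcongr; exact min_le_right _ _
          _ = m' := by field_simp
      · have : M' ≤ max C0 M' := le_max_right _ _
        nlinarith
      · refine mul_le_mul_of_nonneg_right ?_ (abs_nonneg _)
        rw [le_div_iff₀ hgap]
        have : Λ' ≤ max L0 Λ' := le_max_right _ _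
        have := (zb1 n hn).2
        have := (zb n).1
        nlinarith
  exact var_final (lt_min hc0 (by positivity)) (lt_max_of_lt_left hC0) (lt_max_of_lt_left hL0)
    (fun n hn => (zs n hn).2.2) (fun n hn x hx => (main n hn x hx).1)
    (fun n hn x hx => (main n hn x hx).2)
end

section
/- Let ν be a probability measure on [0,1] and let φ : ℝ → ℝ be a function of bounded variation supported on [0,1]. Then V(φ − ν(φ)) ≤ 3 ‖dφ‖, where ν(φ) = ∫φ dν, and the function φ − ν(φ) is understood as φ^{(0)} = φ − ν(φ) on [0,1] (extended by the same centering in the variation over ℝ restricted to [0,1]). -/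
open MeasureTheory Filter Set Topology

theorem aux_Iic (g : ℝ → ℝ) (a : ℝ) (h : ∀ x < a, g x = 0) :
    eVariationOn g (Iic a) ≤ edist (g a) 0 := by
  have h1 := eVariationOn.comp_le_of_monotoneOn g (s := {a - 1, a}) (t := Iic a)
    (fun x => if x < a then a - 1 else a)
    (by intro x _ y _ hxy; dsimp only; split_ifs <;> linarith)
    (by intro x _; dsimp only; split_ifs <;> simp)
  rw [eVariationOn.pair, h (a - 1) (by linarith), edist_comm] at h1
  refine le_trans (le_of_eq (eVariationOn.congr ?_)) h1
  intro x hx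
  simp only [Function.comp]
  split_ifs with hxa
  · rw [h x hxa, h (a - 1) (by linarith)]
  · rw [le_antisymm hx (not_lt.1 hxa)]

theorem aux_Ici (g : ℝ → ℝ) (a : ℝ) (h : ∀ x, a < x → g x = 0) :
    eVariationOn g (Ici a) ≤ edist (g a) 0 := by
  have h1 := eVariationOn.comp_le_of_monotoneOn g (s := {a, a + 1}) (t := Ici a)
    (fun x => if a < x then a + 1 else a)
    (by intro x _ y _ hxy; dsimp only; split_ifs <;> linarith)
    (by intro x _; dsimp only; split_ifs <;> simp)
  rw [eVariationOn.pair, h (a + 1) (by linarith)] at h1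
  refine le_trans (le_of_eq (eVariationOn.congr ?_)) h1
  intro x hx
  simp only [Function.comp]
  split_ifs with hxa
  · rw [h x hxa, h (a + 1) (by linarith)]
  · rw [le_antisymm (not_lt.1 hxa) hx]

theorem statement18
    (ν : Measure ℝ) [IsProbabilityMeasure ν] (hν : ν (Set.Icc (0:ℝ) 1)ᶜ = 0)
    (φ : ℝ → ℝ) (hsupp : ∀ x : ℝ, x ∉ Set.Icc (0:ℝ) 1 → φ x = 0)
    (hBV : eVariationOn φ Set.univ < ⊤) :
    eVariationOn
        (Set.indicator (Set.Icc (0:ℝ) 1) (fun y => φ y - ∫ z, φ z ∂ν)) Set.univ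
      ≤ 3 * eVariationOn φ (Set.Icc (0:ℝ) 1) := by
  have hb : BoundedVariationOn φ (Icc (0:ℝ) 1) :=
    ne_of_lt (lt_of_le_of_lt (eVariationOn.mono φ (subset_univ _)) hBV)
  have hm : Measurable φ := by
    have hu : BoundedVariationOn φ univ := hBV.ne
    obtain ⟨p, q, hp, hq, rfl⟩ := hu.locallyBoundedVariationOn.exists_monotoneOn_sub_monotoneOn
    exact (monotoneOn_univ.1 hp).measurable.sub (monotoneOn_univ.1 hq).measurable
  have hae : ∀ᵐ x ∂ν, x ∈ Icc (0:ℝ) 1 := hν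
  have hd : ∀ a ∈ Icc (0:ℝ) 1, ∀ x ∈ Icc (0:ℝ) 1,
      ‖φ a - φ x‖ ≤ (eVariationOn φ (Icc (0:ℝ) 1)).toReal := by
    intro a ha x hx
    rw [← dist_eq_norm]
    exact hb.dist_le ha hx
  have hi : Integrable φ ν := by
    have h0 : Integrable (fun x => φ 0 - φ x) ν := by
      refine Integrable.of_bound (hm.const_sub _).aestronglyMeasurable
        (eVariationOn φ (Icc (0:ℝ) 1)).toReal ?_
      filter_upwards [hae] with x hx using hd 0 (by simp) x hx
    refine ((integrable_const (φ 0)).sub h0).congr (Eventually.of_forall fun x => ?_)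
    simp
  have key : ∀ a ∈ Icc (0:ℝ) 1, edist (φ a - ∫ z, φ z ∂ν) 0 ≤ eVariationOn φ (Icc (0:ℝ) 1) := by
    intro a ha
    have h1 : φ a - ∫ z, φ z ∂ν = ∫ z, (φ a - φ z) ∂ν := by
      rw [integral_sub (integrable_const _) hi]; simp
    have h2 : ‖φ a - ∫ z, φ z ∂ν‖ ≤ (eVariationOn φ (Icc (0:ℝ) 1)).toReal := by
      rw [h1]
      have := norm_integral_le_of_norm_le_const (μ := ν) (f := fun z => φ a - φ z)
        (C := (eVariationOn φ (Icc (0:ℝ) 1)).toReal)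
        (by filter_upwards [hae] with x hx using hd a ha x hx)
      simpa using this
    rw [edist_dist, dist_zero_right]
    exact ENNReal.ofReal_le_of_le_toReal h2
  set c := ∫ z, φ z ∂ν
  set g := Set.indicator (Set.Icc (0:ℝ) 1) (fun y => φ y - c) with hg
  have e1 : eVariationOn g (Iic 0) ≤ eVariationOn φ (Icc (0:ℝ) 1) := by
    refine (aux_Iic g 0 fun x hx => indicator_of_notMem (fun h => by linarith [h.1]) _).trans ?_
    rw [hg, indicator_of_mem (by simp)]
    exact key 0 (by simp)
  have e2 : eVariationOn g (Ici 1) ≤ eVariationOn φ (Icc (0:ℝ) 1) := by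
    refine (aux_Ici g 1 fun x hx => indicator_of_notMem (fun h => by linarith [h.2]) _).trans ?_
    rw [hg, indicator_of_mem (by simp)]
    exact key 1 (by simp)
  have e3 : eVariationOn g (Icc 0 1) ≤ eVariationOn φ (Icc (0:ℝ) 1) := by
    rw [eVariationOn.congr (g := fun y => φ y - c) (fun x hx => indicator_of_mem hx _)]
    unfold eVariationOn
    simp
  have hu : (univ : Set ℝ) = (Iic 0 ∪ Icc 0 1) ∪ Ici 1 := by
    ext x; simp
  rw [hu, eVariationOn.union g (x := 1), eVariationOn.union g (x := 0)]
  · calc _ ≤ _ := add_le_add (add_le_add e1 e3) e2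
      _ = _ := by ring
  · exact isGreatest_Iic
  · exact isLeast_Icc zero_le_one
  · refine ⟨by simp, ?_⟩
    rintro x (hx | hx)
    · exact le_trans hx zero_le_one
    · exact hx.2
  · exact isLeast_Ici
end

section
/- Let f be a Holland map in Hol(γ,ρ) with γ < 1, with inverse branch v_0, points z_n and intervals J_n. There exists a constant C ≥ 1 such that for all n ≥ 0, k ≥ 1 and all x ∈ J_k, (1/C) · λ(J_{n+k})/λ(J_k) ≤ (v_0^n)'(x) ≤ C · λ(J_{n+k})/λ(J_k), where λ denotes Lebesgue measure and v_0^n is the n-th iterate of v_0. -/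
open MeasureTheory Filter Set Topology

lemma holl_rho {γ : ℝ} {ρ f : ℝ → ℝ} (hf : IsHolland γ ρ f) :
    (∀ x ∈ Set.Ioo (0:ℝ) 1, HasDerivAt ρ (deriv ρ x) x) ∧
    (∀ x ∈ Set.Ioo (0:ℝ) 1, HasDerivAt (deriv ρ) (deriv (deriv ρ) x) x) ∧
    ContinuousOn (deriv (deriv ρ)) (Set.Ioo 0 1) := by
  have h := hf.smooth
  have h2 : ContDiffOn ℝ (1 + 1) ρ (Set.Ioo 0 1) := by
    convert h using 1; norm_num
  rw [contDiffOn_succ_iff_deriv_of_isOpen isOpen_Ioo] at h2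
  obtain ⟨hd, -, h1⟩ := h2
  have h1' : ContDiffOn ℝ (0 + 1) (deriv ρ) (Set.Ioo 0 1) := by
    rw [zero_add]; exact h1
  rw [contDiffOn_succ_iff_deriv_of_isOpen isOpen_Ioo] at h1'
  obtain ⟨hd1, -, h0⟩ := h1'
  exact ⟨fun x hx => ((hd x hx).differentiableAt (isOpen_Ioo.mem_nhds hx)).hasDerivAt,
    fun x hx => ((hd1 x hx).differentiableAt (isOpen_Ioo.mem_nhds hx)).hasDerivAt,
    h0.continuousOn⟩

/-- bounded second derivative after weighting -/
lemma holl_bdd {γ : ℝ} {ρ f : ℝ → ℝ} (hf : IsHolland γ ρ f) :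
    ∃ M : ℝ, 0 ≤ M ∧ ∀ x ∈ Set.Ioo (0:ℝ) (1/2),
      |(1 + γ) * γ * ρ x + 2 * (1 + γ) * (x * deriv ρ x) + x ^ 2 * deriv (deriv ρ) x| ≤ M := by
  obtain ⟨h0, h1, h2⟩ := holl_rho hf
  set g : ℝ → ℝ := fun x =>
    (1 + γ) * γ * ρ x + 2 * (1 + γ) * (x * deriv ρ x) + x ^ 2 * deriv (deriv ρ) x with hg
  have hev : ∀ᶠ x in nhdsWithin (0:ℝ) (Set.Ioi 0), x ∈ Set.Ioo (0:ℝ) 1 :=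
    Ioo_mem_nhdsGT one_pos
  have t1 : Tendsto (fun x => x * deriv ρ x) (nhdsWithin 0 (Set.Ioi 0)) (nhds 0) := by
    have := hf.deriv_small.mul hf.rho_zero
    rw [mul_zero] at this
    refine this.congr' ?_
    filter_upwards [hev] with x hx
    have := (hf.rho_pos x hx).ne'
    field_simp
  have t2 : Tendsto (fun x => x ^ 2 * deriv (deriv ρ) x) (nhdsWithin 0 (Set.Ioi 0)) (nhds 0) := by
    have := hf.deriv2_small.mul hf.rho_zero
    rw [mul_zero] at this
    refine this.congr' ?_
    filter_upwards [hev] with x hx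
    have := (hf.rho_pos x hx).ne'
    field_simp
  have tg : Tendsto g (nhdsWithin 0 (Set.Ioi 0)) (nhds 0) := by
    have := ((hf.rho_zero.const_mul ((1 + γ) * γ)).add (t1.const_mul (2 * (1 + γ)))).add t2
    simpa using this
  have hs : ∀ᶠ x in nhdsWithin (0:ℝ) (Set.Ioi 0), |g x| < 1 := by
    have := tg.abs
    rw [abs_zero] at this
    exact this.eventually (gt_mem_nhds one_pos)
  obtain ⟨δ, hδ, hsub⟩ := mem_nhdsGT_iff_exists_Ioo_subset.1 hs
  have hδ' : (0:ℝ) < δ := hδ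
  have hcont : ContinuousOn g (Set.Icc δ (1/2)) := by
    have hss : Set.Icc δ (1/2) ⊆ Set.Ioo (0:ℝ) 1 := fun x hx =>
      ⟨lt_of_lt_of_le hδ' hx.1, lt_of_le_of_lt hx.2 (by norm_num)⟩
    have c0 : ContinuousOn ρ (Set.Icc δ (1/2)) := fun x hx =>
      (h0 x (hss hx)).continuousAt.continuousWithinAt
    have c1 : ContinuousOn (deriv ρ) (Set.Icc δ (1/2)) := fun x hx =>
      (h1 x (hss hx)).continuousAt.continuousWithinAt
    have c2 := h2.mono hss
    fun_prop
  obtain ⟨M, hM⟩ := isCompact_Icc.exists_bound_of_continuousOn hcont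
  refine ⟨max 1 M, le_trans zero_le_one (le_max_left _ _), fun x hx => ?_⟩
  by_cases hxd : x < δ
  · exact le_trans (le_of_lt (hsub ⟨hx.1, hxd⟩)) (le_max_left _ _)
  · exact le_trans (hM x ⟨not_lt.1 hxd, hx.2.le⟩) (le_max_right _ _)

/-- derivative of `f` on the left branch: facts. -/
lemma holl_D {γ : ℝ} {ρ f : ℝ → ℝ} (hf : IsHolland γ ρ f) :
    ∃ (D : ℝ → ℝ) (L : ℝ), 0 ≤ L ∧
      (∀ x ∈ Set.Ioo (0:ℝ) (1/2), HasDerivAt f (D x) x ∧ 1 < D x) ∧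
      (∀ a ∈ Set.Ioo (0:ℝ) (1/2), ∀ b ∈ Set.Ioo (0:ℝ) (1/2), a ≤ b →
        |D b - D a| ≤ L * (b ^ γ - a ^ γ)) := by
  obtain ⟨h0, h1, h2⟩ := holl_rho hf
  obtain ⟨M, hM0, hM⟩ := holl_bdd hf
  have hγ := hf.gamma_pos
  set D : ℝ → ℝ := fun x => 1 + (1 + γ) * (x ^ γ * ρ x) + x ^ γ * (x * deriv ρ x) with hD
  have hin : ∀ x ∈ Set.Ioo (0:ℝ) (1/2), x ∈ Set.Ioo (0:ℝ) 1 := fun x hx =>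
    ⟨hx.1, hx.2.trans (by norm_num)⟩
  have hp : ∀ x ∈ Set.Ioo (0:ℝ) (1/2), HasDerivAt (fun x : ℝ => x ^ γ) (γ * x ^ (γ - 1)) x :=
    fun x hx => Real.hasDerivAt_rpow_const (Or.inl hx.1.ne')
  have hxx : ∀ x ∈ Set.Ioo (0:ℝ) (1/2), x ^ γ = x * x ^ (γ - 1) := fun x hx => by
    rw [Real.rpow_sub_one hx.1.ne']; field_simp [hx.1.ne']
  have hfd : ∀ x ∈ Set.Ioo (0:ℝ) (1/2), HasDerivAt f (D x) x := by
    intro x hx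
    have e : f =ᶠ[nhds x] fun x => x * (1 + x ^ γ * ρ x) := by
      filter_upwards [isOpen_Ioo.mem_nhds hx] with y hy
      exact hf.eq_left y ⟨hy.1.le, hy.2.le⟩
    have := (hasDerivAt_id x).mul (((hp x hx).mul (h0 x (hin x hx))).const_add 1)
    refine HasDerivAt.congr_of_eventuallyEq ?_ e
    refine this.congr_deriv ?_
    simp only [hD, id, hxx x hx, Pi.mul_apply]
    ring
  have hDd : ∀ x ∈ Set.Ioo (0:ℝ) (1/2), HasDerivAt D (x ^ (γ - 1) *
      ((1 + γ) * γ * ρ x + 2 * (1 + γ) * (x * deriv ρ x) + x ^ 2 * deriv (deriv ρ) x)) x := by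
    intro x hx
    have := ((((hp x hx).mul (h0 x (hin x hx))).const_mul (1 + γ)).const_add 1).add
      ((hp x hx).mul ((hasDerivAt_id x).mul (h1 x (hin x hx))))
    refine this.congr_deriv ?_
    simp only [id, hxx x hx, Pi.mul_apply]
    ring
  refine ⟨D, M / γ, by positivity, fun x hx => ⟨hfd x hx, ?_⟩, ?_⟩
  · rw [← (hfd x hx).deriv]
    exact hf.expanding x (hin x hx) hx.2.ne
  · have key : ∀ s : ℝ, |s| = 1 →
        MonotoneOn (fun x => M / γ * x ^ γ + s * D x) (Set.Ioo (0:ℝ) (1/2)) := by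
      intro s hs
      have hd : ∀ x ∈ Set.Ioo (0:ℝ) (1/2), HasDerivAt (fun x => M / γ * x ^ γ + s * D x)
          (M / γ * (γ * x ^ (γ - 1)) + s * (x ^ (γ - 1) *
      ((1 + γ) * γ * ρ x + 2 * (1 + γ) * (x * deriv ρ x) + x ^ 2 * deriv (deriv ρ) x))) x :=
        fun x hx => ((hp x hx).const_mul _).add ((hDd x hx).const_mul s)
      apply monotoneOn_of_deriv_nonneg (convex_Ioo _ _)
      · exact fun x hx => (hd x hx).continuousAt.continuousWithinAt
      · rw [interior_Ioo]
        exact fun x hx => (hd x hx).differentiableAt.differentiableWithinAt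
      · rw [interior_Ioo]
        intro x hx
        rw [(hd x hx).deriv]
        set G := (1 + γ) * γ * ρ x + 2 * (1 + γ) * (x * deriv ρ x) + x ^ 2 * deriv (deriv ρ) x
        have hG : |s * G| ≤ M := by rw [abs_mul, hs, one_mul]; exact hM x hx
        have e : M / γ * (γ * x ^ (γ - 1)) + s * (x ^ (γ - 1) * G)
            = x ^ (γ - 1) * (M + s * G) := by field_simp
        rw [e]
        exact mul_nonneg (Real.rpow_nonneg hx.1.le _) (by linarith [(abs_le.1 hG).1])
    intro a ha b hb hab
    have k1 := key 1 (by simp) ha hb hab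
    have k2 := key (-1) (by simp) ha hb hab
    simp only at k1 k2
    rw [abs_le]
    constructor <;> linarith

lemma holl_expand {f D : ℝ → ℝ}
    (hD : ∀ x ∈ Set.Ioo (0:ℝ) (1/2), HasDerivAt f (D x) x ∧ 1 < D x) :
    ∀ a ∈ Set.Ioo (0:ℝ) (1/2), ∀ b ∈ Set.Ioo (0:ℝ) (1/2), a ≤ b → b - a ≤ f b - f a := by
  have : MonotoneOn (fun x => f x - x) (Set.Ioo (0:ℝ) (1/2)) := by
    have hd : ∀ x ∈ Set.Ioo (0:ℝ) (1/2), HasDerivAt (fun x => f x - x) (D x - 1) x :=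
      fun x hx => (hD x hx).1.sub (hasDerivAt_id x)
    apply monotoneOn_of_deriv_nonneg (convex_Ioo _ _)
    · exact fun x hx => (hd x hx).continuousAt.continuousWithinAt
    · rw [interior_Ioo]
      exact fun x hx => (hd x hx).differentiableAt.differentiableWithinAt
    · rw [interior_Ioo]
      intro x hx
      rw [(hd x hx).deriv]
      linarith [(hD x hx).2]
  intro a ha b hb hab
  have := this ha hb hab
  simp only at this
  linarith

theorem statement19
    (γ : ℝ) (ρ : ℝ → ℝ) (f : ℝ → ℝ) (hγ0 : 0 < γ) (hγ1 : γ < 1)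
    (hf : IsHolland γ ρ f)
    (v0 : ℝ → ℝ)
    (hv0 : ∀ x ∈ Set.Ioo (0:ℝ) 1, v0 x ∈ Set.Ioo (0:ℝ) (1/2) ∧ f (v0 x) = x)
    (z : ℕ → ℝ) (hz0 : z 0 = 1) (hz1 : z 1 = 1/2)
    (hzrec : ∀ n : ℕ, 1 ≤ n → z (n + 1) = v0 (z n)) :
    ∃ C : ℝ, 1 ≤ C ∧ ∀ n k : ℕ, 1 ≤ k → ∀ x ∈ Set.Ioc (z (k + 1)) (z k),
      C⁻¹ * ((MeasureTheory.volume (Set.Ioc (z (n + k + 1)) (z (n + k)))).toReal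
          / (MeasureTheory.volume (Set.Ioc (z (k + 1)) (z k))).toReal)
        ≤ deriv (v0^[n]) x ∧
      deriv (v0^[n]) x
        ≤ C * ((MeasureTheory.volume (Set.Ioc (z (n + k + 1)) (z (n + k)))).toReal
          / (MeasureTheory.volume (Set.Ioc (z (k + 1)) (z k))).toReal) := by
  obtain ⟨D, L, hL, hD, hDL⟩ := holl_D hf
  have hexp := holl_expand hD
  have hmono : ∀ x ∈ Set.Ioo (0:ℝ) 1, ∀ y ∈ Set.Ioo (0:ℝ) 1, x < y → v0 x < v0 y := by
    intro x hx y hy hxy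
    by_contra hc
    have := hexp _ (hv0 y hy).1 _ (hv0 x hx).1 (not_lt.1 hc)
    rw [(hv0 x hx).2, (hv0 y hy).2] at this
    linarith
  have hlip : ∀ x ∈ Set.Ioo (0:ℝ) 1, ∀ y ∈ Set.Ioo (0:ℝ) 1, |v0 y - v0 x| ≤ |y - x| := by
    have aux : ∀ x ∈ Set.Ioo (0:ℝ) 1, ∀ y ∈ Set.Ioo (0:ℝ) 1, x < y →
        |v0 y - v0 x| ≤ |y - x| := by
      intro x hx y hy hxy
      have h1 := hmono x hx y hy hxy
      have := hexp _ (hv0 x hx).1 _ (hv0 y hy).1 h1.le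
      rw [(hv0 x hx).2, (hv0 y hy).2] at this
      rwa [abs_of_pos (by linarith), abs_of_pos (by linarith)]
    intro x hx y hy
    rcases lt_trichotomy x y with h | h | h
    · exact aux x hx y hy h
    · subst h; simp
    · rw [abs_sub_comm, abs_sub_comm y]; exact aux y hy x hx h
  have hder : ∀ x ∈ Set.Ioo (0:ℝ) 1, HasDerivAt v0 (D (v0 x))⁻¹ x := by
    intro x hx
    have hn := isOpen_Ioo.mem_nhds hx
    have hc : ContinuousAt v0 x := by
      rw [ContinuousAt, tendsto_iff_dist_tendsto_zero]
      refine squeeze_zero' (Eventually.of_forall fun _ => dist_nonneg)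
        (g := fun y => |y - x|) ?_ ?_
      · filter_upwards [hn] with y hy
        rw [Real.dist_eq]; exact hlip x hx y hy
      · have : Continuous fun y : ℝ => |y - x| := by fun_prop
        simpa using this.tendsto x
    refine HasDerivAt.of_local_left_inverse hc (hD _ (hv0 x hx).1).1
      (by linarith [(hD _ (hv0 x hx).1).2]) ?_
    filter_upwards [hn] with y hy
    exact (hv0 y hy).2
  have hvlt : ∀ x ∈ Set.Ioo (0:ℝ) 1, v0 x < x := by
    intro x hx
    have h := (hv0 x hx).1
    have e := hf.eq_left _ ⟨h.1.le, h.2.le⟩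
    rw [(hv0 x hx).2] at e
    have : 0 < v0 x * (v0 x ^ γ * ρ (v0 x)) :=
      mul_pos h.1 (mul_pos (Real.rpow_pos_of_pos h.1 _)
        (hf.rho_pos _ ⟨h.1, h.2.trans (by norm_num)⟩))
    nlinarith
  have hzmem : ∀ n : ℕ, 1 ≤ n → z n ∈ Set.Ioo (0:ℝ) 1 := by
    intro n hn
    induction n, hn using Nat.le_induction with
    | base => rw [hz1]; norm_num
    | succ n hn ih =>
      rw [hzrec n hn]
      exact ⟨(hv0 _ ih).1.1, (hv0 _ ih).1.2.trans (by norm_num)⟩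
  have hzlt : ∀ n : ℕ, 1 ≤ n → z (n + 1) < z n := by
    intro n hn
    rw [hzrec n hn]
    exact hvlt _ (hzmem n hn)
  have hziter : ∀ n k : ℕ, 1 ≤ k → v0^[n] (z k) = z (n + k) := by
    intro n k hk
    induction n with
    | zero => simp
    | succ n ih =>
      rw [Function.iterate_succ_apply', ih, ← hzrec _ (by omega)]
      congr 1; omega
  have hmaps : ∀ k : ℕ, 1 ≤ k → ∀ x ∈ Set.Icc (z (k + 1)) (z k),
      x ∈ Set.Ioo (0:ℝ) 1 := fun k hk x hx =>
    ⟨lt_of_lt_of_le (hzmem (k + 1) (by omega)).1 hx.1, lt_of_le_of_lt hx.2 (hzmem k hk).2⟩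
  have hvmono : ∀ x ∈ Set.Ioo (0:ℝ) 1, ∀ y ∈ Set.Ioo (0:ℝ) 1, x ≤ y → v0 x ≤ v0 y := by
    intro x hx y hy hxy
    rcases hxy.lt_or_eq with h | h
    · exact (hmono x hx y hy h).le
    · rw [h]
  have hstep : ∀ k : ℕ, 1 ≤ k → ∀ x ∈ Set.Icc (z (k + 1)) (z k),
      v0 x ∈ Set.Icc (z (k + 1 + 1)) (z (k + 1)) := by
    intro k hk x hx
    rw [hzrec (k + 1) (by omega), hzrec k hk]
    have := hmaps k hk x hx
    rw [← hzrec k hk]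
    refine ⟨hvmono _ (hzmem _ (by omega)) _ this hx.1, ?_⟩
    rw [hzrec k hk]
    exact hvmono _ this _ (hzmem _ hk) hx.2
  have hitmem : ∀ n k : ℕ, 1 ≤ k → ∀ x ∈ Set.Icc (z (k + 1)) (z k),
      v0^[n] x ∈ Set.Icc (z (n + k + 1)) (z (n + k)) := by
    intro n k hk x hx
    induction n with
    | zero => simpa using hx
    | succ n ih =>
      rw [Function.iterate_succ_apply', show n + 1 + k = n + k + 1 by omega]
      exact hstep (n + k) (by omega) _ ih
  have hdit : ∀ n k : ℕ, 1 ≤ k → ∀ x ∈ Set.Icc (z (k + 1)) (z k),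
      HasDerivAt (v0^[n]) (deriv (v0^[n]) x) x ∧
      deriv (v0^[n + 1]) x = (D (v0^[n + 1] x))⁻¹ * deriv (v0^[n]) x ∧
      0 < deriv (v0^[n]) x := by
    intro n k hk x hx
    have hs : ∀ n d, HasDerivAt (v0^[n]) d x →
        HasDerivAt (v0^[n + 1]) ((D (v0^[n + 1] x))⁻¹ * d) x := by
      intro n d hd
      rw [Function.iterate_succ', Function.comp_apply]
      exact (hder _ (hmaps _ (by omega) _ (hitmem n k hk x hx))).comp x hd
    have hDp : ∀ n, 0 < D (v0^[n + 1] x) := by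
      intro n
      rw [Function.iterate_succ_apply']
      linarith [(hD _ (hv0 _ (hmaps _ (by omega) _ (hitmem n k hk x hx))).1).2]
    have h0 : HasDerivAt (v0^[n]) (deriv (v0^[n]) x) x ∧ 0 < deriv (v0^[n]) x := by
      induction n with
      | zero =>
        have : HasDerivAt (v0^[0]) 1 x := hasDerivAt_id x
        rw [this.deriv]
        exact ⟨this, one_pos⟩
      | succ n ih =>
        have := hs n _ ih.1
        rw [this.deriv]
        exact ⟨this, mul_pos (inv_pos.2 (hDp n)) ih.2⟩
    exact ⟨h0.1, (hs n _ h0.1).deriv, h0.2⟩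
  -- one step distortion
  have hone : ∀ m : ℕ, 2 ≤ m → ∀ a ∈ Set.Icc (z (m + 1)) (z m), ∀ b ∈ Set.Icc (z (m + 1)) (z m),
      (D a)⁻¹ ≤ Real.exp (L * (z m ^ γ - z (m + 1) ^ γ)) * (D b)⁻¹ := by
    intro m hm a ha b hb
    have hzm : z m ∈ Set.Ioo (0:ℝ) (1/2) := by
      obtain ⟨j, rfl⟩ : ∃ j, m = j + 1 := ⟨m - 1, by omega⟩
      rw [hzrec j (by omega)]
      exact (hv0 _ (hzmem j (by omega))).1
    have hz' := hzmem (m + 1) (by omega)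
    have hI : ∀ c ∈ Set.Icc (z (m + 1)) (z m), c ∈ Set.Ioo (0:ℝ) (1/2) := fun c hc =>
      ⟨lt_of_lt_of_le hz'.1 hc.1, lt_of_le_of_lt hc.2 hzm.2⟩
    have hr : ∀ c ∈ Set.Icc (z (m + 1)) (z m), z (m + 1) ^ γ ≤ c ^ γ ∧ c ^ γ ≤ z m ^ γ :=
      fun c hc => ⟨Real.rpow_le_rpow hz'.1.le hc.1 hγ0.le,
        Real.rpow_le_rpow (hI c hc).1.le hc.2 hγ0.le⟩
    have hra := hr a ha
    have hrb := hr b hb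
    have hdiff : D b - D a ≤ L * (z m ^ γ - z (m + 1) ^ γ) := by
      rcases le_total a b with h | h
      · have := hDL a (hI a ha) b (hI b hb) h
        refine (le_abs_self _).trans (this.trans ?_)
        exact mul_le_mul_of_nonneg_left (by linarith) hL
      · have := hDL b (hI b hb) a (hI a ha) h
        rw [abs_sub_comm] at this
        refine (le_abs_self _).trans (this.trans ?_)
        exact mul_le_mul_of_nonneg_left (by linarith) hL
    have hDa := (hD a (hI a ha)).2
    have hDb := (hD b (hI b hb)).2
    set T := L * (z m ^ γ - z (m + 1) ^ γ)
    have hT : 0 ≤ T := mul_nonneg hL (by linarith)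
    have he := Real.add_one_le_exp T
    rw [← div_eq_mul_inv, inv_eq_one_div, div_le_div_iff₀ (by linarith) (by linarith)]
    nlinarith
  have hdist : ∀ n k : ℕ, 1 ≤ k → ∀ x ∈ Set.Icc (z (k + 1)) (z k),
      ∀ y ∈ Set.Icc (z (k + 1)) (z k),
      deriv (v0^[n]) x ≤
        Real.exp (L * (z (k + 1) ^ γ - z (n + k + 1) ^ γ)) * deriv (v0^[n]) y := by
    intro n k hk x hx y hy
    induction n with
    | zero => simp
    | succ n ih =>
      rw [(hdit n k hk x hx).2.1, (hdit n k hk y hy).2.1]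
      have h1 := hone (n + 1 + k) (by omega) _ (hitmem (n + 1) k hk x hx) _
        (hitmem (n + 1) k hk y hy)
      have hDp : 0 < D (v0^[n + 1] y) := by
        rw [Function.iterate_succ_apply']
        linarith [(hD _ (hv0 _ (hmaps _ (by omega) _ (hitmem n k hk y hy))).1).2]
      have h2 := mul_le_mul h1 ih (hdit n k hk x hx).2.2.le
        (mul_nonneg (Real.exp_pos _).le (inv_pos.2 hDp).le)
      refine h2.trans (le_of_eq ?_)
      rw [mul_mul_mul_comm, ← Real.exp_add]
      congr 2
      rw [show n + 1 + k = n + k + 1 by omega]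
      ring
  have hdist' : ∀ n k : ℕ, 1 ≤ k → ∀ x ∈ Set.Icc (z (k + 1)) (z k),
      ∀ y ∈ Set.Icc (z (k + 1)) (z k),
      deriv (v0^[n]) x ≤ Real.exp L * deriv (v0^[n]) y := by
    intro n k hk x hx y hy
    refine (hdist n k hk x hx y hy).trans
      (mul_le_mul_of_nonneg_right (Real.exp_le_exp.2 ?_) (hdit n k hk y hy).2.2.le)
    have a1 := hzmem (k + 1) (by omega)
    have a2 := hzmem (n + k + 1) (by omega)
    have b1 : z (k + 1) ^ γ ≤ 1 := Real.rpow_le_one a1.1.le a1.2.le hγ0.le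
    have b2 : 0 ≤ z (n + k + 1) ^ γ := Real.rpow_nonneg a2.1.le _
    nlinarith
  refine ⟨Real.exp L, Real.one_le_exp hL, fun n k hk x hx => ?_⟩
  have hx' : x ∈ Set.Icc (z (k + 1)) (z k) := ⟨hx.1.le, hx.2⟩
  rw [Real.volume_Ioc, Real.volume_Ioc,
    ENNReal.toReal_ofReal (by linarith [hzlt (n + k) (by omega)]),
    ENNReal.toReal_ofReal (by linarith [hzlt k hk])]
  obtain ⟨ξ, hξ, hξe⟩ := exists_deriv_eq_slope (v0^[n]) (hzlt k hk)
    (fun y hy => (hdit n k hk y hy).1.continuousAt.continuousWithinAt)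
    (fun y hy => (hdit n k hk y ⟨hy.1.le, hy.2.le⟩).1.differentiableAt.differentiableWithinAt)
  rw [hziter n k hk, hziter n (k + 1) (by omega), ← add_assoc] at hξe
  rw [← hξe]
  have hξ' : ξ ∈ Set.Icc (z (k + 1)) (z k) := ⟨hξ.1.le, hξ.2.le⟩
  refine ⟨?_, hdist' n k hk x hx' ξ hξ'⟩
  rw [inv_mul_le_iff₀ (Real.exp_pos _)]
  exact hdist' n k hk ξ hξ' x hx'
end
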